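/- There exists a constant C₀ > 0 such that for every u ∈ C_c^∞(B) with u not identically zero, one has H(u) > 0 and ∫_B exp(4π u(x)² / H(u)) dx ≤ C₀. -/

import Mathlib

/-!
Let `b` be a point outside the closed disc and `ψ(x) = √(1-|x|²) / |x-b|`. This is a positive strict
supersolution of the Hardy operator: with `X = ∇ψ/ψ`, completing the square and integrating by parts
gives (`IsC1Test.hardy_eq_setIntegral`)

  `H(u) = ∫_B |∇u - u X|² + ((|b|²-1) / ((1-|x|²)|x-b|²)) u²`,

so `H(u) > 0`. If `1 - |a| = 4R` and `b` is the reflection of `a` in the nearest boundary point, the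
zeroth order coefficient is at least `(13R)⁻²` on `ball a (2R)`. Hence
`F = (|∇u - uX|² + (u/13R)²)^{1/2}` satisfies `∫_{ball a (2R)} F² ≤ H(u)`.

For `x ∈ ball a R`, the derivative of `(1-(r/R)²) u/ψ` is integrated along the rays issuing from `x`
and the result is averaged over directions:
`2π|u(x)| ≤ ∫_{ball a (2R)} F(y) (1/|x-y| + 107/R) dy`
(`IsC1Test.ofReal_two_sqrt_pi_mul_abs_le`, with both sides divided by `√π`). The leading kernel
carries the sharp constant and the remainder is scale invariant. Averaging over a set of measure `ε`
where `|u|` is large yields an O'Neil type inequality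
(`IsNewtonianKernel.rearrangement_lintegral_le`) that bounds the decreasing rearrangement of
`2√π|u|` at `ε` by `∫ F*(τ) k_ε(τ) dτ`, where `k_ε(τ) = 1/√τ + O(1/R)` for `τ > ε`. After the
Cauchy–Schwarz inequality on the two sides of the points `M e^{-j}`, a discrete version of the lemma
of Garsia used for the Adams inequality (`IsGarsiaSeq.sum_exp_le`) gives
`∫_{ball a R} exp(4πu²/H(u)) ≤ C R²` with an absolute constant `C` (`IsC1Test.setLIntegral_exp_le`).

Finally the local estimates are integrated over `a ∈ B` against `(1-|a|)⁻² da`; every `x ∈ B` is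
covered by the discs `ball a ((1-|a|)/4)` with total weight bounded below.
-/

open MeasureTheory Real Filter
noncomputable section
/-- `ℝ²` as a Euclidean space. -/
abbrev E2 : Type := EuclideanSpace ℝ (Fin 2)

/-- The open unit disc in `ℝ²`. -/
def B2 : Set E2 := Metric.ball 0 1

/-- `u ∈ C_c^∞(B)`: a smooth function with compact support contained in the open unit disc. -/
def IsTest (u : E2 → ℝ) : Prop :=
  ContDiff ℝ (⊤ : ℕ∞) u ∧ HasCompactSupport u ∧ tsupport u ⊆ B2

/-- The Hardy functional `H(u) = ∫_B |∇u|² − ∫_B u²/(1−|x|²)²`. -/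
def H (u : E2 → ℝ) : ℝ :=
  (∫ x in B2, ‖gradient u x‖ ^ 2) - ∫ x in B2, (u x) ^ 2 / (1 - ‖x‖ ^ 2) ^ 2

/-! ### A discrete Garsia lemma -/

/-- A sequence `Φ` satisfying the discrete form of the hypothesis of Adams' lemma: for every `j`,
the index range is cut at `j`, and `L j` and `√(1 - L j ^ 2)` are the `L²` norms that the two parts
of a unit function contribute. -/
structure IsGarsiaSeq (Φ L : ℕ → ℝ) (K : ℝ) : Prop where
  one_le : 1 ≤ K
  nonneg : ∀ k, 0 ≤ Φ k
  mem_Icc : ∀ k, L k ∈ Set.Icc (0 : ℝ) 1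
  le : ∀ j n : ℕ, Φ (j + n) ≤ L j * √(n + K) + √(1 - L j ^ 2) * √(j + K)

namespace IsGarsiaSeq

variable {Φ L : ℕ → ℝ} {K : ℝ}

lemma sq_sub_le (hΦ : IsGarsiaSeq Φ L K) (k : ℕ) : Φ k ^ 2 - k ≤ 2 * K := by
  have hK := hΦ.one_le
  obtain ⟨hl0, hl1⟩ := hΦ.mem_Icc k
  have hle : Φ k ≤ L k * √K + √(1 - L k ^ 2) * √(k + K) := by simpa using hΦ.le k 0
  have hs : √(1 - L k ^ 2) ^ 2 = 1 - L k ^ 2 := sq_sqrt (by nlinarith)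
  have hJ : √(k + K) ^ 2 = k + K := sq_sqrt (by positivity)
  have hQ : √K ^ 2 = K := sq_sqrt (by linarith)
  have hsq : Φ k ^ 2 ≤ (L k * √K + √(1 - L k ^ 2) * √(k + K)) ^ 2 :=
    pow_le_pow_left₀ (hΦ.nonneg k) hle 2
  -- Cauchy–Schwarz for `(L k, √(1 - L k ^ 2))` and `(√K, √(k + K))`.
  nlinarith [sq_nonneg (L k * √(k + K) - √(1 - L k ^ 2) * √K)]

-- `√(1 - L j ^ 2) ≤ 1` leaves `L j * √(j + K)` as the only factor of the cross term to control.
lemma sq_add_le (hΦ : IsGarsiaSeq Φ L K) (j n : ℕ) :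
    Φ (j + n) ^ 2 ≤ L j ^ 2 * (n + K) + 2 * √(n + K) * (L j * √(j + K)) +
      (1 - L j ^ 2) * (j + K) := by
  have hK := hΦ.one_le
  obtain ⟨hl0, hl1⟩ := hΦ.mem_Icc j
  have hl2 : L j ^ 2 ≤ 1 := pow_le_one₀ hl0 hl1
  have hs : √(1 - L j ^ 2) ^ 2 = 1 - L j ^ 2 := sq_sqrt (by linarith)
  have hs1 : √(1 - L j ^ 2) ≤ 1 := Real.sqrt_le_one.2 (by nlinarith [sq_nonneg (L j)])
  have hJ : √(j + K) ^ 2 = j + K := sq_sqrt (by positivity)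
  have hN : √(n + K) ^ 2 = n + K := sq_sqrt (by positivity)
  calc Φ (j + n) ^ 2 ≤ (L j * √(n + K) + √(1 - L j ^ 2) * √(j + K)) ^ 2 :=
        pow_le_pow_left₀ (hΦ.nonneg _) (hΦ.le j n) 2
    _ = L j ^ 2 * √(n + K) ^ 2 + 2 * √(n + K) * (L j * √(j + K)) * √(1 - L j ^ 2) +
          √(1 - L j ^ 2) ^ 2 * √(j + K) ^ 2 := by ring
    _ ≤ L j ^ 2 * √(n + K) ^ 2 + 2 * √(n + K) * (L j * √(j + K)) * 1 +
          √(1 - L j ^ 2) ^ 2 * √(j + K) ^ 2 := by gcongr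
    _ = _ := by rw [hs, hJ, hN, mul_one]

lemma sq_mul_le_of_sub_sq_le (hΦ : IsGarsiaSeq Φ L K) {t : ℝ} {j : ℕ}
    (hj : (j : ℝ) - Φ j ^ 2 ≤ t) : L j ^ 2 * (j + K) ≤ 2 * t + 8 * K := by
  have hK := hΦ.one_le
  obtain ⟨hl0, hl1⟩ := hΦ.mem_Icc j
  have hle := hΦ.sq_add_le j 0
  simp only [add_zero, Nat.cast_zero, zero_add] at hle
  have hJ : √(j + K) ^ 2 = j + K := sq_sqrt (by positivity)
  have hQ : √K ^ 2 = K := sq_sqrt (by linarith)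
  have hlK : L j ^ 2 * K ≤ K := mul_le_of_le_one_left (by linarith) (pow_le_one₀ hl0 hl1)
  have hsq : (L j * √(j + K)) ^ 2 = L j ^ 2 * (j + K) := by rw [mul_pow, hJ]
  nlinarith [sq_nonneg (L j * √(j + K) - 2 * √K)]

lemma lt_or_gap_le (hΦ : IsGarsiaSeq Φ L K) {t : ℝ} {j n : ℕ}
    (hj : (j : ℝ) - Φ j ^ 2 ≤ t) (hjn : ((j + n : ℕ) : ℝ) - Φ (j + n) ^ 2 ≤ t) :
    (j : ℝ) < 4 * t + 17 * K ∨ (n : ℝ) ≤ 36 * t + 140 * K := by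
  have hK := hΦ.one_le
  have hz := hΦ.sq_mul_le_of_sub_sq_le hj
  have hle := hΦ.sq_add_le j n
  have hJ : √(j + K) ^ 2 = j + K := sq_sqrt (by positivity)
  have hN : √(n + K) ^ 2 = n + K := sq_sqrt (by positivity)
  have hsq : (L j * √(j + K)) ^ 2 = L j ^ 2 * (j + K) := by rw [mul_pow, hJ]
  push_cast at hjn
  rcases le_or_gt (L j ^ 2) (1 / 2) with hl | hl
  · right
    have hlN : L j ^ 2 * (n + K) ≤ 1 / 2 * (n + K) := by gcongr
    nlinarith [sq_nonneg (4 * (L j * √(j + K)) - √(n + K))]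
  · left
    have hlJ : 1 / 2 * (j + K) ≤ L j ^ 2 * (j + K) := by gcongr
    linarith

lemma card_sublevel_le (hΦ : IsGarsiaSeq Φ L K) (t N : ℕ) :
    (((Finset.range N).filter fun k : ℕ => (k : ℝ) - Φ k ^ 2 ≤ t).card : ℝ)
      ≤ 40 * t + 157 * K + 3 := by
  have hK := hΦ.one_le
  set S := (Finset.range N).filter fun k : ℕ => (k : ℝ) - Φ k ^ 2 ≤ t
  set p := ⌈4 * t + 17 * K⌉₊
  set q := ⌊36 * t + 140 * K⌋₊
  have hp_le : 4 * t + 17 * K ≤ p := Nat.le_ceil _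
  have hp_lt : (p : ℝ) < 4 * t + 17 * K + 1 := Nat.ceil_lt_add_one (by positivity)
  have hq_le : (q : ℝ) ≤ 36 * t + 140 * K := Nat.floor_le (by positivity)
  obtain ⟨j, hj⟩ : ∃ j, S ⊆ Finset.range p ∪ Finset.Icc j (j + q) := by
    rcases (S.filter (p ≤ ·)).eq_empty_or_nonempty with hempty | hne
    · refine ⟨0, fun k hk => Finset.mem_union_left _ ?_⟩
      simpa using Finset.filter_eq_empty_iff.1 hempty hk
    · obtain ⟨j, hj, hmin⟩ := Finset.exists_min_image _ id hne
      obtain ⟨hjS, hpj⟩ := Finset.mem_filter.1 hj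
      refine ⟨j, fun k hk => ?_⟩
      rcases lt_or_ge k p with hkp | hpk
      · exact Finset.mem_union_left _ (Finset.mem_range.2 hkp)
      have hjk : j ≤ k := hmin k (Finset.mem_filter.2 ⟨hk, hpk⟩)
      obtain ⟨n, rfl⟩ := Nat.exists_eq_add_of_le hjk
      have hpj' : (p : ℝ) ≤ j := mod_cast hpj
      have hn := (hΦ.lt_or_gap_le (Finset.mem_filter.1 hjS).2
        (Finset.mem_filter.1 hk).2).resolve_left (by linarith)
      have hnq : n ≤ q := Nat.le_floor hn
      exact Finset.mem_union_right _ (Finset.mem_Icc.2 (by omega))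
  have hcard : S.card ≤ p + (q + 1) := by
    refine (Finset.card_le_card hj).trans ((Finset.card_union_le _ _).trans ?_)
    simp only [Finset.card_range, Nat.card_Icc]
    omega
  have hcard' : (S.card : ℝ) ≤ p + (q + 1) := mod_cast hcard
  linarith

end IsGarsiaSeq

lemma exp_neg_le_tsum_indicator {A t : ℝ} (hA : 0 ≤ A) (ht : -A ≤ t) :
    rexp (-t) ≤
      rexp (A + 1) * ∑' n : ℕ, {n : ℕ | t ≤ n}.indicator (fun n => rexp (-(n : ℝ))) n := by
  have hceil : (⌈t⌉₊ : ℝ) ≤ t + A + 1 := by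
    rcases le_or_gt 0 t with h0 | h0
    · linarith [Nat.ceil_lt_add_one h0]
    · rw [Nat.ceil_eq_zero.2 h0.le, Nat.cast_zero]
      linarith
  have hterm : rexp (-(⌈t⌉₊ : ℝ)) ≤
      ∑' n : ℕ, {n : ℕ | t ≤ n}.indicator (fun n => rexp (-(n : ℝ))) n := by
    have hmem : ⌈t⌉₊ ∈ {n : ℕ | t ≤ n} := Nat.le_ceil t
    rw [← Set.indicator_of_mem hmem fun n : ℕ => rexp (-(n : ℝ))]
    exact (Real.summable_exp_neg_nat.indicator _).le_tsum ⌈t⌉₊ fun n _ =>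
      Set.indicator_nonneg (fun _ _ => (exp_pos _).le) _
  calc rexp (-t) ≤ rexp (A + 1) * rexp (-(⌈t⌉₊ : ℝ)) := by
        rw [← Real.exp_add]
        exact Real.exp_le_exp.2 (by linarith)
    _ ≤ _ := by gcongr

/-- The bound of the discrete Garsia lemma, see `IsGarsiaSeq.sum_exp_le`. -/
def garsiaConst (K : ℝ) : ℝ :=
  rexp (2 * K + 1) * ∑' n : ℕ, rexp (-(n : ℝ)) * (40 * n + 157 * K + 3)

lemma summable_exp_neg_mul_affine (a b : ℝ) :
    Summable fun n : ℕ => rexp (-(n : ℝ)) * (a * n + b) := by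
  have h1 : Summable fun n : ℕ => (n : ℝ) * rexp (-(n : ℝ)) := by
    simpa using Real.summable_pow_mul_exp_neg_nat_mul 1 one_pos
  exact ((h1.mul_left a).add (Real.summable_exp_neg_nat.mul_left b)).congr fun n => by ring

lemma garsiaConst_pos {K : ℝ} (hK : 0 < K) : 0 < garsiaConst K := by
  refine mul_pos (exp_pos _) (Summable.tsum_pos ?_ (fun n => by positivity) 0 (by positivity))
  simpa only [add_assoc] using summable_exp_neg_mul_affine 40 (157 * K + 3)

lemma IsGarsiaSeq.sum_exp_le {Φ L : ℕ → ℝ} {K : ℝ} (hΦ : IsGarsiaSeq Φ L K) (N : ℕ) :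
    ∑ k ∈ Finset.range N, rexp (Φ k ^ 2 - k) ≤ garsiaConst K := by
  have hK := hΦ.one_le
  set f : ℕ → ℕ → ℝ := fun k => {n : ℕ | (k : ℝ) - Φ k ^ 2 ≤ n}.indicator fun n => rexp (-(n : ℝ))
  have hf_sum : ∀ n, ∑ k ∈ Finset.range N, f k n ≤
      rexp (-(n : ℝ)) * (40 * n + 157 * K + 3) := fun n => by
    calc ∑ k ∈ Finset.range N, f k n
        = (((Finset.range N).filter fun k : ℕ => (k : ℝ) - Φ k ^ 2 ≤ n).card : ℝ) *
            rexp (-(n : ℝ)) := by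
          rw [← nsmul_eq_mul, ← Finset.sum_const, Finset.sum_filter]
          rfl
      _ ≤ (40 * n + 157 * K + 3) * rexp (-(n : ℝ)) := by
          gcongr
          exact hΦ.card_sublevel_le n N
      _ = _ := mul_comm _ _
  calc ∑ k ∈ Finset.range N, rexp (Φ k ^ 2 - k)
      ≤ ∑ k ∈ Finset.range N, rexp (2 * K + 1) * ∑' n, f k n := by
        refine Finset.sum_le_sum fun k _ => ?_
        rw [← neg_sub]
        exact exp_neg_le_tsum_indicator (by linarith) (by linarith [hΦ.sq_sub_le k])
    _ = rexp (2 * K + 1) * ∑' n, ∑ k ∈ Finset.range N, f k n := by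
        rw [← Finset.mul_sum,
          Summable.tsum_finsetSum fun k _ => Real.summable_exp_neg_nat.indicator _]
    _ ≤ garsiaConst K := by
        refine mul_le_mul_of_nonneg_left (Summable.tsum_le_tsum hf_sum ?_ ?_) (exp_pos _).le
        · exact summable_sum fun k _ => Real.summable_exp_neg_nat.indicator _
        · simpa only [add_assoc] using summable_exp_neg_mul_affine 40 (157 * K + 3)

/-! ### Decreasing rearrangement -/

section LayerCake

lemma Ioi_inter_setOf_ofReal_lt {c : ENNReal} (hc : c ≠ ⊤) :
    Set.Ioi (0 : ℝ) ∩ {t | ENNReal.ofReal t < c} = Set.Ioo 0 c.toReal :=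
  Set.ext fun _ => and_congr_right fun ht =>
    ENNReal.ofReal_lt_iff_lt_toReal (le_of_lt ht) hc

lemma volume_Ioi_inter_setOf_ofReal_lt (c : ENNReal) :
    volume (Set.Ioi (0 : ℝ) ∩ {t | ENNReal.ofReal t < c}) = c := by
  rcases eq_or_ne c ⊤ with rfl | hc
  · simp
  · rw [Ioi_inter_setOf_ofReal_lt hc, volume_Ioo, sub_zero, ENNReal.ofReal_toReal hc]

variable {α : Type*} [MeasurableSpace α] (μ : Measure α) [SFinite μ] {f k : α → ENNReal}

lemma lintegral_mul_eq_lintegral_superlevel (hf : Measurable f) (hk : Measurable k) :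
    ∫⁻ y, f y * k y ∂μ =
      ∫⁻ t in Set.Ioi (0 : ℝ), ∫⁻ y in {y | ENNReal.ofReal t < f y}, k y ∂μ := by
  have hmeas (c : ENNReal) : MeasurableSet {t : ℝ | ENNReal.ofReal t < c} :=
    measurableSet_lt ENNReal.measurable_ofReal measurable_const
  have hlayer (y : α) : f y * k y = ∫⁻ t in Set.Ioi (0 : ℝ),
      {t : ℝ | ENNReal.ofReal t < f y}.indicator (fun _ => k y) t := by
    rw [setLIntegral_indicator (hmeas _), setLIntegral_const, Set.inter_comm,
      volume_Ioi_inter_setOf_ofReal_lt, mul_comm]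
  have hmeas_prod : MeasurableSet {p : α × ℝ | ENNReal.ofReal p.2 < f p.1} :=
    measurableSet_lt (by fun_prop) (by fun_prop)
  simp only [hlayer]
  rw [lintegral_lintegral_swap (Measurable.aemeasurable (by
    exact (hk.comp measurable_fst).indicator hmeas_prod))]
  refine lintegral_congr fun t => ?_
  rw [← lintegral_indicator (measurableSet_lt measurable_const hf)]
  rfl

-- Superlevel sets are nested, so applying the layer cake formula twice expresses `∫ f²` through
-- the distribution function alone.
lemma lintegral_sq_eq_lintegral_superlevel (hf : Measurable f) :
    ∫⁻ y, f y ^ 2 ∂μ = ∫⁻ t in Set.Ioi (0 : ℝ), ∫⁻ s in Set.Ioi (0 : ℝ),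
      μ {y | ENNReal.ofReal (max s t) < f y} := by
  simp only [sq]
  rw [lintegral_mul_eq_lintegral_superlevel μ hf hf]
  refine lintegral_congr fun t => ?_
  have h := lintegral_mul_eq_lintegral_superlevel (μ.restrict {y | ENNReal.ofReal t < f y}) hf
    (measurable_const (a := (1 : ENNReal)))
  simp only [mul_one] at h
  rw [h]
  refine lintegral_congr fun s => ?_
  rw [setLIntegral_one, Measure.restrict_apply (measurableSet_lt measurable_const hf)]
  simp only [ENNReal.ofReal_max, max_lt_iff]
  rfl

end LayerCake

/-- The decreasing rearrangement of `F` with respect to `μ`, as the generalised inverse of the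
distribution function `l ↦ μ {F > l}`. -/
def rearrangement {α : Type*} [MeasurableSpace α] (μ : Measure α) (F : α → ENNReal) (τ : ℝ) :
    ENNReal :=
  sSup {l | ENNReal.ofReal τ < μ {y | l < F y}}

section Rearrangement

variable {α : Type*} [MeasurableSpace α] {μ : Measure α} {F : α → ENNReal}

-- This is the right continuity of the distribution function.
lemma lt_rearrangement_iff {τ : ℝ} {l : ENNReal} :
    l < rearrangement μ F τ ↔ ENNReal.ofReal τ < μ {y | l < F y} := by
  constructor
  · intro h
    obtain ⟨l', hl', hlt⟩ := lt_sSup_iff.1 h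
    exact hl'.trans_le (measure_mono fun y hy => hlt.trans hy)
  · intro h
    have hl : l ≠ ⊤ := by
      rintro rfl
      simp at h
    obtain ⟨v, hanti, hgt, hlim⟩ := exists_seq_strictAnti_tendsto' (lt_top_iff_ne_top.2 hl)
    have hU : {y | l < F y} = ⋃ n, {y | v n < F y} := by
      ext y
      simp only [Set.mem_ofPred_eq, Set.mem_iUnion]
      exact ⟨fun hy => (hlim.eventually_lt_const hy).exists,
        fun ⟨n, hn⟩ => (hgt n).1.trans hn⟩
    have hmono : Monotone fun n => {y | v n < F y} :=
      fun m n hmn y hy => (hanti.antitone hmn).trans_lt hy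
    rw [hU, hmono.measure_iUnion, lt_iSup_iff] at h
    obtain ⟨n, hn⟩ := h
    exact (hgt n).1.trans_le (le_sSup hn)

lemma antitone_rearrangement : Antitone (rearrangement μ F) := fun _ _ h =>
  sSup_le_sSup fun _ hl => (ENNReal.ofReal_le_ofReal h).trans_lt hl

lemma measurable_rearrangement : Measurable (rearrangement μ F) :=
  antitone_rearrangement.measurable

lemma rearrangement_eq_zero {τ : ℝ} (h : μ Set.univ ≤ ENNReal.ofReal τ) :
    rearrangement μ F τ = 0 := by
  by_contra h0
  have := lt_rearrangement_iff.1 (pos_iff_ne_zero.2 h0)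
  exact (this.trans_le (measure_mono (Set.subset_univ _))).not_ge h

lemma setLIntegral_Ioo_rearrangement_mul {M : ℝ} (hM : μ Set.univ ≤ ENNReal.ofReal M)
    (w : ℝ → ENNReal) :
    ∫⁻ τ in Set.Ioo 0 M, rearrangement μ F τ * w τ =
      ∫⁻ τ in Set.Ioi 0, rearrangement μ F τ * w τ := by
  rw [← Set.Ioi_inter_Iio, Set.inter_comm, ← setLIntegral_indicator measurableSet_Iio]
  refine lintegral_congr fun τ => Set.indicator_apply_eq_self.2 fun hτ => ?_
  rw [rearrangement_eq_zero (hM.trans (ENNReal.ofReal_le_ofReal (not_lt.1 hτ))), zero_mul]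

lemma setOf_lt_rearrangement (l : ENNReal) :
    {τ | l < rearrangement μ F τ} = {τ | ENNReal.ofReal τ < μ {y | l < F y}} :=
  Set.ext fun _ => lt_rearrangement_iff

variable [SFinite μ]

lemma lintegral_rearrangement_sq (hF : Measurable F) :
    ∫⁻ τ in Set.Ioi 0, rearrangement μ F τ ^ 2 = ∫⁻ y, F y ^ 2 ∂μ := by
  have hdist (l : ENNReal) : volume.restrict (Set.Ioi 0) {τ | l < rearrangement μ F τ} =
      μ {y | l < F y} := by
    rw [Measure.restrict_apply (measurableSet_lt measurable_const measurable_rearrangement),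
      setOf_lt_rearrangement, Set.inter_comm, volume_Ioi_inter_setOf_ofReal_lt]
  rw [lintegral_sq_eq_lintegral_superlevel _ measurable_rearrangement,
    lintegral_sq_eq_lintegral_superlevel _ hF]
  simp only [hdist]

-- Compare the superlevel sets in the layer cake formula.
lemma lintegral_mul_le_lintegral_rearrangement_mul {k : α → ENNReal} {w : ℝ → ENNReal}
    (hF : Measurable F) (hk : Measurable k) (hw : Measurable w)
    (h : ∀ G : Set α, MeasurableSet G → ∫⁻ y in G, k y ∂μ ≤
      ∫⁻ τ in Set.Ioi 0 ∩ {τ | ENNReal.ofReal τ < μ G}, w τ) :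
    ∫⁻ y, F y * k y ∂μ ≤ ∫⁻ τ in Set.Ioi 0, rearrangement μ F τ * w τ := by
  rw [lintegral_mul_eq_lintegral_superlevel _ hF hk,
    lintegral_mul_eq_lintegral_superlevel _ measurable_rearrangement hw]
  refine lintegral_mono fun t => ?_
  rw [Measure.restrict_restrict (measurableSet_lt measurable_const measurable_rearrangement),
    setOf_lt_rearrangement, Set.inter_comm]
  exact h _ (measurableSet_lt measurable_const hF)

end Rearrangement

/-! ### O'Neil's inequality -/

lemma setLIntegral_Ioo_add_Ico {a b c : ℝ} (hab : a < b) (hbc : b ≤ c) (f : ℝ → ENNReal) :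
    ∫⁻ τ in Set.Ioo a c, f τ = (∫⁻ τ in Set.Ioo a b, f τ) + ∫⁻ τ in Set.Ico b c, f τ := by
  rw [← Set.Ioo_union_Ico_eq_Ioo hab hbc, lintegral_union measurableSet_Ico
    (Set.Ico_disjoint_Ico_same.mono_left Set.Ioo_subset_Ico_self)]

lemma setLIntegral_Ico_of_hasDerivAt {a b : ℝ} (hab : a ≤ b) {f f' : ℝ → ℝ}
    (hf : ∀ τ ∈ Set.Icc a b, HasDerivAt f (f' τ) τ) (hf' : ContinuousOn f' (Set.Icc a b))
    (hnonneg : ∀ τ ∈ Set.Icc a b, 0 ≤ f' τ) :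
    ∫⁻ τ in Set.Ico a b, ENNReal.ofReal (f' τ) = ENNReal.ofReal (f b - f a) := by
  rw [restrict_Ico_eq_restrict_Ioc, ← ofReal_integral_eq_lintegral_ofReal,
    ← intervalIntegral.integral_of_le hab, intervalIntegral.integral_eq_sub_of_hasDerivAt]
  · rwa [Set.uIcc_of_le hab]
  · exact hf'.intervalIntegrable_of_Icc hab
  · exact hf'.integrableOn_Icc.mono_set Set.Ioc_subset_Icc_self
  · exact ae_restrict_of_forall_mem measurableSet_Ioc fun τ hτ =>
      hnonneg τ (Set.Ioc_subset_Icc_self hτ)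

lemma hasDerivAt_two_mul_sqrt {τ : ℝ} (h : 0 < τ) :
    HasDerivAt (fun t => 2 * √t) (1 / √τ) τ := by
  refine ((hasDerivAt_sqrt h.ne').const_mul 2).congr_deriv ?_
  field_simp

/-- The one-dimensional kernel that replaces a Newtonian kernel after averaging over a set of
measure at least `ε`. -/
def oneilKernel (ε κ τ : ℝ) : ℝ := (if τ < ε then 2 / √ε else 1 / √τ) + κ

section OneilKernel

variable {ε κ : ℝ}

lemma measurable_oneilKernel (ε κ : ℝ) : Measurable (oneilKernel ε κ) :=
  (Measurable.ite measurableSet_Iio (by fun_prop) (by fun_prop)).add_const _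

lemma oneilKernel_of_lt {τ : ℝ} (h : τ < ε) : oneilKernel ε κ τ = 2 / √ε + κ := by
  rw [oneilKernel, if_pos h]

lemma oneilKernel_of_le {τ : ℝ} (h : ε ≤ τ) : oneilKernel ε κ τ = 1 / √τ + κ := by
  rw [oneilKernel, if_neg h.not_gt]

lemma setLIntegral_oneilKernel_of_le {g : ℝ} (hκ : 0 ≤ κ) (hg : g ≤ ε) :
    ∫⁻ τ in Set.Ioo 0 g, ENNReal.ofReal (oneilKernel ε κ τ) =
      ENNReal.ofReal (2 * g / √ε + κ * g) := by
  rw [setLIntegral_congr_fun measurableSet_Ioo fun τ hτ => by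
      rw [oneilKernel_of_lt (hτ.2.trans_le hg)],
    setLIntegral_const, volume_Ioo, ← ENNReal.ofReal_mul (by positivity)]
  congr 1
  ring

lemma setLIntegral_oneilKernel_of_ge {g : ℝ} (hκ : 0 ≤ κ) (hε : 0 < ε) (hg : ε ≤ g) :
    ∫⁻ τ in Set.Ioo 0 g, ENNReal.ofReal (oneilKernel ε κ τ) =
      ENNReal.ofReal (2 * √g + κ * g) := by
  have hpos : ∀ τ ∈ Set.Icc ε g, 0 < √τ := fun τ hτ => sqrt_pos.2 (hε.trans_le hτ.1)
  have hIco : ∫⁻ τ in Set.Ico ε g, ENNReal.ofReal (oneilKernel ε κ τ) =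
      ENNReal.ofReal (2 * √g + κ * g - (2 * √ε + κ * ε)) := by
    rw [setLIntegral_congr_fun measurableSet_Ico fun τ hτ => by rw [oneilKernel_of_le hτ.1]]
    refine setLIntegral_Ico_of_hasDerivAt (f := fun τ => 2 * √τ + κ * τ) hg (fun τ hτ => ?_) ?_
      fun τ hτ => by have := hpos τ hτ; positivity
    · exact ((hasDerivAt_two_mul_sqrt (hε.trans_le hτ.1)).add
        ((hasDerivAt_id τ).const_mul κ)).congr_deriv (by rw [mul_one])
    · exact (continuousOn_const.div (by fun_prop) fun τ hτ => (hpos τ hτ).ne').add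
        continuousOn_const
  have hεsqrt : 2 * ε / √ε = 2 * √ε := by rw [mul_div_assoc, div_sqrt]
  have hle : 2 * √ε + κ * ε ≤ 2 * √g + κ * g := by gcongr
  rw [setLIntegral_Ioo_add_Ico hε hg, setLIntegral_oneilKernel_of_le hκ le_rfl, hIco, hεsqrt,
    ← ENNReal.ofReal_add (by positivity) (sub_nonneg.2 hle), add_sub_cancel]

end OneilKernel

/-- A kernel on `α × β` all of whose sections have decreasing rearrangement at most `1 / √τ + κ`,
in integrated form. -/
structure IsNewtonianKernel {α β : Type*} [MeasurableSpace α] [MeasurableSpace β] (μ : Measure α)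
    (ν : Measure β) (N : α → β → ENNReal) (κ : ℝ) : Prop where
  measurable : Measurable (Function.uncurry N)
  nonneg : 0 ≤ κ
  setLIntegral_left_le : ∀ E, MeasurableSet E → ∀ y,
    ∫⁻ x in E, N x y ∂μ ≤ ENNReal.ofReal (2 * √(μ.real E) + κ * μ.real E)
  setLIntegral_right_le : ∀ G, MeasurableSet G → ∀ x,
    ∫⁻ y in G, N x y ∂ν ≤ ENNReal.ofReal (2 * √(ν.real G) + κ * ν.real G)

namespace IsNewtonianKernel

variable {α β : Type*} [MeasurableSpace α] [MeasurableSpace β] {μ : Measure α} {ν : Measure β}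
  [IsFiniteMeasure μ] [IsFiniteMeasure ν] {N : α → β → ENNReal} {κ ε : ℝ} {F : β → ENNReal}

lemma setLIntegral_setLIntegral_le (hN : IsNewtonianKernel μ ν N κ) (hε : 0 < ε) {E : Set α}
    (hE : MeasurableSet E) (hεE : ε ≤ μ.real E) {G : Set β} (hG : MeasurableSet G) :
    ∫⁻ y in G, ∫⁻ x in E, N x y ∂μ ∂ν ≤
      μ E * ∫⁻ τ in Set.Ioo 0 (ν.real G), ENNReal.ofReal (oneilKernel ε κ τ) := by
  have hκ := hN.nonneg
  rw [← ofReal_measureReal (s := E)]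
  rcases le_or_gt ε (ν.real G) with h | h
  · rw [setLIntegral_oneilKernel_of_ge hκ hε h,
      lintegral_lintegral_swap (f := fun y x => N x y)
        (hN.measurable.comp measurable_swap).aemeasurable]
    calc ∫⁻ x in E, ∫⁻ y in G, N x y ∂ν ∂μ
        ≤ ∫⁻ _ in E, ENNReal.ofReal (2 * √(ν.real G) + κ * ν.real G) ∂μ :=
          lintegral_mono (hN.setLIntegral_right_le G hG)
      _ = _ := by rw [setLIntegral_const, ofReal_measureReal, mul_comm]
  · rw [setLIntegral_oneilKernel_of_le hκ h.le]
    have hsqrt : √(μ.real E) ≤ μ.real E / √ε := by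
      rw [le_div_iff₀ (sqrt_pos.2 hε)]
      calc √(μ.real E) * √ε ≤ √(μ.real E) * √(μ.real E) := by gcongr
        _ = μ.real E := mul_self_sqrt measureReal_nonneg
    calc ∫⁻ y in G, ∫⁻ x in E, N x y ∂μ ∂ν
        ≤ ∫⁻ _ in G, ENNReal.ofReal (2 * (μ.real E / √ε) + κ * μ.real E) ∂ν :=
          lintegral_mono fun y => (hN.setLIntegral_left_le E hE y).trans (by gcongr)
      _ = _ := by
          rw [setLIntegral_const, ← ofReal_measureReal (s := G),
            ← ENNReal.ofReal_mul (by positivity), ← ENNReal.ofReal_mul (by positivity)]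
          congr 1
          ring

/-- **O'Neil's inequality** for the potential of `F`. -/
theorem rearrangement_lintegral_le (hN : IsNewtonianKernel μ ν N κ) (hF : Measurable F)
    (hε : 0 < ε) :
    rearrangement μ (fun x => ∫⁻ y, F y * N x y ∂ν) ε ≤
      ∫⁻ τ in Set.Ioi 0, rearrangement ν F τ * ENNReal.ofReal (oneilKernel ε κ τ) := by
  refine sSup_le fun l hl => ?_
  have hkernel := measurable_oneilKernel ε κ
  have hFN : Measurable (Function.uncurry fun x y => F y * N x y) :=
    (hF.comp measurable_snd).mul hN.measurable
  set E := {x | l < ∫⁻ y, F y * N x y ∂ν}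
  have hE : MeasurableSet E := measurableSet_lt measurable_const hFN.lintegral_prod_right'
  have hE0 : μ E ≠ 0 := (bot_le.trans_lt hl).ne'
  have hεE : ε ≤ μ.real E := (ENNReal.ofReal_le_iff_le_toReal (measure_ne_top μ E)).1 hl.le
  have hrearr := lintegral_mul_le_lintegral_rearrangement_mul (μ := ν) hF
    (k := fun y => ∫⁻ x in E, N x y ∂μ)
    (w := fun τ => μ E * ENNReal.ofReal (oneilKernel ε κ τ))
    hN.measurable.lintegral_prod_left' (by fun_prop) fun G hG => by
      rw [Ioi_inter_setOf_ofReal_lt (measure_ne_top ν G),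
        lintegral_const_mul' _ _ (measure_ne_top μ E)]
      exact hN.setLIntegral_setLIntegral_le hε hE hεE hG
  refine (ENNReal.mul_le_mul_iff_right hE0 (measure_ne_top μ E)).1 ?_
  calc μ E * l = ∫⁻ _ in E, l ∂μ := by rw [setLIntegral_const, mul_comm]
    _ ≤ ∫⁻ x in E, ∫⁻ y, F y * N x y ∂ν ∂μ := setLIntegral_mono' hE fun x hx => le_of_lt hx
    _ = ∫⁻ y, ∫⁻ x in E, F y * N x y ∂μ ∂ν := lintegral_lintegral_swap hFN.aemeasurable
    _ = ∫⁻ y, F y * ∫⁻ x in E, N x y ∂μ ∂ν := lintegral_congr fun y =>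
        lintegral_const_mul _ (hN.measurable.comp measurable_prodMk_right)
    _ ≤ _ := hrearr
    _ = _ := by
        simp only [mul_left_comm _ (μ E)]
        exact lintegral_const_mul' _ _ (measure_ne_top μ E)

end IsNewtonianKernel

/-! ### Adams' argument -/

lemma lintegral_mul_le_sqrt_mul_sqrt {α : Type*} [MeasurableSpace α] {μ : Measure α}
    {f g : α → ENNReal} (hf : AEMeasurable f μ) (hg : AEMeasurable g μ) {A B : ℝ} (hA : 0 ≤ A)
    (hB : 0 ≤ B) (hfA : ∫⁻ x, f x ^ 2 ∂μ ≤ ENNReal.ofReal A)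
    (hgB : ∫⁻ x, g x ^ 2 ∂μ ≤ ENNReal.ofReal B) :
    ∫⁻ x, f x * g x ∂μ ≤ ENNReal.ofReal (√A * √B) := by
  have h := ENNReal.lintegral_mul_le_Lp_mul_Lq μ Real.HolderConjugate.two_two hf hg
  simp only [ENNReal.rpow_two] at h
  refine h.trans ?_
  rw [ENNReal.ofReal_mul (sqrt_nonneg _), sqrt_eq_rpow, sqrt_eq_rpow,
    ← ENNReal.ofReal_rpow_of_nonneg hA (by norm_num),
    ← ENNReal.ofReal_rpow_of_nonneg hB (by norm_num)]
  gcongr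

section OneilKernelSq

variable {ε κ q : ℝ}

lemma setLIntegral_Ioo_oneilKernel_sq_le (hκ : 0 ≤ κ) (hε : 0 < ε) (hq : κ * √ε ≤ q) :
    ∫⁻ τ in Set.Ioo 0 ε, ENNReal.ofReal (oneilKernel ε κ τ) ^ 2 ≤
      ENNReal.ofReal ((2 + q) ^ 2) := by
  rw [setLIntegral_congr_fun measurableSet_Ioo fun τ hτ => by rw [oneilKernel_of_lt hτ.2],
    setLIntegral_const, volume_Ioo, ← ENNReal.ofReal_pow (by positivity),
    ← ENNReal.ofReal_mul (by positivity), sub_zero]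
  have hsq : (2 / √ε + κ) ^ 2 * ε = (2 + κ * √ε) ^ 2 := by
    nth_rewrite 2 [← sq_sqrt hε.le]
    rw [← mul_pow, add_mul, div_mul_cancel₀ _ (sqrt_pos.2 hε).ne']
  rw [hsq]
  gcongr

lemma setLIntegral_Ico_oneilKernel_sq_le {e g : ℝ} (hκ : 0 ≤ κ) (he : 0 < e) (hε : ε ≤ e)
    (hg : e ≤ g) (hq : κ * √g ≤ q) :
    ∫⁻ τ in Set.Ico e g, ENNReal.ofReal (oneilKernel ε κ τ) ^ 2 ≤
      ENNReal.ofReal (log (g / e) + (4 * q + q ^ 2)) := by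
  have hpos : ∀ τ ∈ Set.Icc e g, 0 < τ := fun τ hτ => he.trans_le hτ.1
  have hsq : ∀ τ ∈ Set.Ico e g, ENNReal.ofReal (oneilKernel ε κ τ) ^ 2 =
      ENNReal.ofReal (τ⁻¹ + 2 * κ * (1 / √τ) + κ ^ 2) := fun τ hτ => by
    have hτ0 := hpos τ (Set.Ico_subset_Icc_self hτ)
    rw [oneilKernel_of_le (hε.trans hτ.1), ← ENNReal.ofReal_pow (by positivity), add_sq, div_pow,
      sq_sqrt hτ0.le, one_pow, one_div τ]
    congr 1
    ring
  have hderiv : ∀ τ ∈ Set.Icc e g, HasDerivAt (fun τ => log τ + 2 * κ * (2 * √τ) + κ ^ 2 * τ)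
      (τ⁻¹ + 2 * κ * (1 / √τ) + κ ^ 2) τ := fun τ hτ => by
    have hτ0 := hpos τ hτ
    exact (((hasDerivAt_log hτ0.ne').add ((hasDerivAt_two_mul_sqrt hτ0).const_mul (2 * κ))).add
      ((hasDerivAt_id τ).const_mul (κ ^ 2))).congr_deriv (by rw [mul_one])
  have hcont : ContinuousOn (fun τ => τ⁻¹ + 2 * κ * (1 / √τ) + κ ^ 2) (Set.Icc e g) := by
    have hinv := continuousOn_id.inv₀ fun τ hτ => (hpos τ hτ).ne'
    have hsqrt : ContinuousOn (fun τ => 1 / √τ) (Set.Icc e g) :=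
      continuousOn_const.div (by fun_prop) fun τ hτ => (sqrt_pos.2 (hpos τ hτ)).ne'
    exact (hinv.add (continuousOn_const.mul hsqrt)).add continuousOn_const
  rw [setLIntegral_congr_fun measurableSet_Ico hsq,
    setLIntegral_Ico_of_hasDerivAt hg hderiv hcont fun τ hτ => by
      have := hpos τ hτ
      positivity]
  refine ENNReal.ofReal_le_ofReal ?_
  have hg0 : 0 < g := he.trans_le hg
  have hκg : κ ^ 2 * g ≤ q ^ 2 := by
    rw [← sq_sqrt hg0.le, ← mul_pow]
    gcongr
  have hκe : 0 ≤ κ * √e := by positivity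
  have hκe_sq : 0 ≤ κ ^ 2 * e := by positivity
  rw [log_div hg0.ne' he.ne']
  linarith

lemma setLIntegral_oneilKernel_sq_le {g : ℝ} (hκ : 0 ≤ κ) (hε : 0 < ε) (hg : ε ≤ g)
    (hq : κ * √g ≤ q) :
    ∫⁻ τ in Set.Ioo 0 g, ENNReal.ofReal (oneilKernel ε κ τ) ^ 2 ≤
      ENNReal.ofReal (log (g / ε) + (2 * q ^ 2 + 8 * q + 4)) := by
  have hq0 : 0 ≤ q := le_trans (by positivity) hq
  have hlog : 0 ≤ log (g / ε) := log_nonneg ((one_le_div hε).2 hg)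
  rw [setLIntegral_Ioo_add_Ico hε hg]
  grw [setLIntegral_Ioo_oneilKernel_sq_le hκ hε (le_trans (by gcongr) hq),
    setLIntegral_Ico_oneilKernel_sq_le hκ hε le_rfl hg hq]
  rw [← ENNReal.ofReal_add (by positivity) (by positivity)]
  refine ENNReal.ofReal_le_ofReal (le_of_eq ?_)
  ring

-- The Cauchy–Schwarz inequality on either side of `e`.
lemma setLIntegral_mul_oneilKernel_le {f : ℝ → ENNReal} (hf : Measurable f) {e M : ℝ}
    (hκ : 0 ≤ κ) (hε : 0 < ε) (hεe : ε ≤ e) (heM : e ≤ M) (hq : κ * √M ≤ q)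
    (hf1 : ∫⁻ τ in Set.Ioo 0 M, f τ ^ 2 ≤ 1) :
    ∫⁻ τ in Set.Ioo 0 M, f τ * ENNReal.ofReal (oneilKernel ε κ τ) ≤ ENNReal.ofReal
      (√(∫⁻ τ in Set.Ioo 0 e, f τ ^ 2).toReal * √(log (e / ε) + (2 * q ^ 2 + 8 * q + 4)) +
        √(1 - (∫⁻ τ in Set.Ioo 0 e, f τ ^ 2).toReal) *
          √(log (M / e) + (2 * q ^ 2 + 8 * q + 4))) := by
  have he : 0 < e := hε.trans_le hεe
  have hq0 : 0 ≤ q := le_trans (by positivity) hq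
  have hlog_e : 0 ≤ log (e / ε) := log_nonneg ((one_le_div hε).2 hεe)
  have hlog_M : 0 ≤ log (M / e) := log_nonneg ((one_le_div he).2 heM)
  have hkernel : Measurable fun τ => ENNReal.ofReal (oneilKernel ε κ τ) :=
    (measurable_oneilKernel ε κ).ennreal_ofReal
  rw [setLIntegral_Ioo_add_Ico he heM] at hf1 ⊢
  set A := ∫⁻ τ in Set.Ioo 0 e, f τ ^ 2
  have hA1 : A ≤ 1 := le_self_add.trans hf1
  have hA : A ≠ ⊤ := ne_top_of_le_ne_top ENNReal.one_ne_top hA1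
  have hA_le : A.toReal ≤ 1 := ENNReal.toReal_le_of_le_ofReal zero_le_one (by simpa using hA1)
  have hf_Ico : ∫⁻ τ in Set.Ico e M, f τ ^ 2 ≤ ENNReal.ofReal (1 - A.toReal) := by
    rw [ENNReal.ofReal_sub _ ENNReal.toReal_nonneg, ENNReal.ofReal_toReal hA, ENNReal.ofReal_one]
    exact ENNReal.le_sub_of_add_le_left hA hf1
  rw [ENNReal.ofReal_add (by positivity) (by positivity)]
  refine add_le_add
    (lintegral_mul_le_sqrt_mul_sqrt hf.aemeasurable hkernel.aemeasurable ENNReal.toReal_nonneg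
      (by positivity) (ENNReal.ofReal_toReal hA).ge
      (setLIntegral_oneilKernel_sq_le hκ hε hεe (le_trans (by gcongr) hq)))
    (lintegral_mul_le_sqrt_mul_sqrt hf.aemeasurable hkernel.aemeasurable (sub_nonneg.2 hA_le)
      (by positivity) hf_Ico ?_)
  refine (setLIntegral_Ico_oneilKernel_sq_le hκ he hεe heM hq).trans
    (ENNReal.ofReal_le_ofReal ?_)
  nlinarith

lemma isGarsiaSeq_setLIntegral_mul_oneilKernel {f : ℝ → ENNReal} (hf : Measurable f) {M : ℝ}
    (hM : 0 < M) (hκ : 0 ≤ κ) (hq : κ * √M ≤ q) (hf1 : ∫⁻ τ in Set.Ioo 0 M, f τ ^ 2 ≤ 1) :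
    IsGarsiaSeq
      (fun k => (∫⁻ τ in Set.Ioo 0 M,
        f τ * ENNReal.ofReal (oneilKernel (M * rexp (-(k : ℝ))) κ τ)).toReal)
      (fun k => √(∫⁻ τ in Set.Ioo 0 (M * rexp (-(k : ℝ))), f τ ^ 2).toReal)
      (2 * q ^ 2 + 8 * q + 4) where
  one_le := by
    have : 0 ≤ q := le_trans (by positivity) hq
    nlinarith
  nonneg _ := ENNReal.toReal_nonneg
  mem_Icc k := by
    refine ⟨sqrt_nonneg _, sqrt_le_one.2 (ENNReal.toReal_le_of_le_ofReal zero_le_one ?_)⟩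
    rw [ENNReal.ofReal_one]
    refine (lintegral_mono_set (Set.Ioo_subset_Ioo_right ?_)).trans hf1
    exact mul_le_of_le_one_right hM.le (exp_le_one_iff.2 (by simp))
  le j n := by
    have hε_le : M * rexp (-((j + n : ℕ) : ℝ)) ≤ M * rexp (-(j : ℝ)) := by
      gcongr
      exact Nat.le_add_right j n
    have hle_M : M * rexp (-(j : ℝ)) ≤ M :=
      mul_le_of_le_one_right hM.le (exp_le_one_iff.2 (by simp))
    have hlog : log (M * rexp (-(j : ℝ)) / (M * rexp (-((j + n : ℕ) : ℝ)))) = n := by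
      rw [mul_div_mul_left _ _ hM.ne', ← exp_sub, log_exp]
      push_cast
      ring
    have hlog_M : log (M / (M * rexp (-(j : ℝ)))) = j := by
      rw [div_mul_cancel_left₀ hM.ne', ← exp_neg, log_exp, neg_neg]
    have h := setLIntegral_mul_oneilKernel_le hf hκ (by positivity) hε_le hle_M hq hf1
    rw [hlog, hlog_M] at h
    rw [sq_sqrt ENNReal.toReal_nonneg]
    exact ENNReal.toReal_le_of_le_ofReal (by positivity) h

end OneilKernelSq

section ExpIntegral

variable {α : Type*} {y : α → ℝ} {Φ : ℕ → ℝ}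

lemma exp_sq_le_add_tsum_indicator {x : α} (hx : ∃ k, |y x| ≤ Φ k) :
    ENNReal.ofReal (rexp (y x ^ 2)) ≤ ENNReal.ofReal (rexp (Φ 0 ^ 2)) +
      ∑' k : ℕ, {x | Φ k < |y x|}.indicator
        (fun _ => ENNReal.ofReal (rexp (Φ (k + 1) ^ 2))) x := by
  classical
  have hmono (k : ℕ) (hk : |y x| ≤ Φ k) :
      ENNReal.ofReal (rexp (y x ^ 2)) ≤ ENNReal.ofReal (rexp (Φ k ^ 2)) := by
    rw [← sq_abs]
    gcongr
  have hfind := Nat.find_spec hx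
  rcases hm : Nat.find hx with _ | k
  · rw [hm] at hfind
    exact le_add_right (hmono 0 hfind)
  · rw [hm] at hfind
    have hlt : x ∈ {x | Φ k < |y x|} := not_le.1 (Nat.find_min hx (by lia))
    refine le_add_left (le_trans ?_ (ENNReal.le_tsum k))
    rw [Set.indicator_of_mem hlt]
    exact hmono (k + 1) hfind

variable [MeasurableSpace α] {μ : Measure α} {M : ℝ}

lemma ae_exists_abs_le
    (h : ∀ k : ℕ, μ {x | Φ k < |y x|} ≤ ENNReal.ofReal (M * rexp (-(k : ℝ)))) :
    ∀ᵐ x ∂μ, ∃ k, |y x| ≤ Φ k := by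
  have hlim : Tendsto (fun k : ℕ => M * rexp (-(k : ℝ))) atTop (nhds (M * 0)) :=
    (tendsto_exp_neg_atTop_nhds_zero.comp tendsto_natCast_atTop_atTop).const_mul M
  have hlim' := ENNReal.tendsto_ofReal hlim
  rw [mul_zero, ENNReal.ofReal_zero] at hlim'
  rw [ae_iff, ← nonpos_iff_eq_zero]
  refine ge_of_tendsto' hlim' fun k => (measure_mono fun x hx => ?_).trans (h k)
  exact not_le.1 fun hk => hx ⟨k, hk⟩

lemma ofReal_exp_mul_ofReal_mul_exp_neg (hM : 0 ≤ M) (c t : ℝ) :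
    ENNReal.ofReal (rexp c) * ENNReal.ofReal (M * rexp (-t)) =
      ENNReal.ofReal (M * rexp 1) * ENNReal.ofReal (rexp (c - (t + 1))) := by
  rw [← ENNReal.ofReal_mul (by positivity), ← ENNReal.ofReal_mul (by positivity),
    mul_left_comm, ← exp_add, mul_assoc, ← exp_add]
  congr 3
  ring

lemma lintegral_exp_sq_le_of_forall_measure_le (hy : Measurable y) (hM : 0 < M)
    (hμ : μ Set.univ ≤ ENNReal.ofReal M)
    (h : ∀ k : ℕ, μ {x | Φ k < |y x|} ≤ ENNReal.ofReal (M * rexp (-(k : ℝ)))) {C : ℝ}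
    (hC : ∀ N, ∑ k ∈ Finset.range N, rexp (Φ k ^ 2 - k) ≤ C) :
    ∫⁻ x, ENNReal.ofReal (rexp (y x ^ 2)) ∂μ ≤ ENNReal.ofReal (M * rexp 1 * C) := by
  have hmeas (k : ℕ) : MeasurableSet {x | Φ k < |y x|} :=
    measurableSet_lt measurable_const (measurable_norm.comp hy)
  calc ∫⁻ x, ENNReal.ofReal (rexp (y x ^ 2)) ∂μ
      ≤ ∫⁻ x, (ENNReal.ofReal (rexp (Φ 0 ^ 2)) + ∑' k : ℕ, {x | Φ k < |y x|}.indicator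
          (fun _ => ENNReal.ofReal (rexp (Φ (k + 1) ^ 2))) x) ∂μ :=
        lintegral_mono_ae ((ae_exists_abs_le h).mono fun x => exp_sq_le_add_tsum_indicator)
    _ = ENNReal.ofReal (rexp (Φ 0 ^ 2)) * μ Set.univ + ∑' k : ℕ,
          ENNReal.ofReal (rexp (Φ (k + 1) ^ 2)) * μ {x | Φ k < |y x|} := by
        rw [lintegral_add_left measurable_const, lintegral_const, lintegral_tsum fun k =>
          (measurable_const.indicator (hmeas k)).aemeasurable]
        simp only [lintegral_indicator_const (hmeas _)]
    _ ≤ ENNReal.ofReal (rexp (Φ 0 ^ 2)) * ENNReal.ofReal M + ∑' k : ℕ,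
          ENNReal.ofReal (rexp (Φ (k + 1) ^ 2)) * ENNReal.ofReal (M * rexp (-(k : ℝ))) := by
        gcongr with k
        exact h k
    _ ≤ ENNReal.ofReal (M * rexp 1) * ENNReal.ofReal (rexp (Φ 0 ^ 2 - (0 : ℕ))) + ∑' k : ℕ,
          ENNReal.ofReal (M * rexp 1) *
            ENNReal.ofReal (rexp (Φ (k + 1) ^ 2 - ((k + 1 : ℕ) : ℝ))) := by
        simp only [ofReal_exp_mul_ofReal_mul_exp_neg hM.le, Nat.cast_add_one, Nat.cast_zero,
          sub_zero]
        rw [mul_comm]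
        gcongr
        exact le_mul_of_one_le_right hM.le (one_le_exp zero_le_one)
    _ = ENNReal.ofReal (M * rexp 1) * ∑' k : ℕ, ENNReal.ofReal (rexp (Φ k ^ 2 - (k : ℝ))) := by
        rw [ENNReal.tsum_mul_left, ← mul_add, ← tsum_eq_zero_add'
          (f := fun k : ℕ => ENNReal.ofReal (rexp (Φ k ^ 2 - (k : ℝ)))) ENNReal.summable]
    _ ≤ ENNReal.ofReal (M * rexp 1) * ENNReal.ofReal C := by
        gcongr
        refine ENNReal.tsum_le_of_sum_range_le fun N => ?_
        rw [← ENNReal.ofReal_sum_of_nonneg fun k _ => (exp_pos _).le]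
        exact ENNReal.ofReal_le_ofReal (hC N)
    _ = _ := (ENNReal.ofReal_mul (by positivity)).symm

end ExpIntegral

/-- **Adams' exponential integrability** for potentials of functions in the unit ball of `L²`. -/
theorem IsNewtonianKernel.lintegral_exp_sq_le {α β : Type*} [MeasurableSpace α]
    [MeasurableSpace β] {μ : Measure α} {ν : Measure β} {N : α → β → ENNReal} {κ M q : ℝ}
    (hN : IsNewtonianKernel μ ν N κ) (hM : 0 < M)
    (hμ : μ Set.univ ≤ ENNReal.ofReal M) (hν : ν Set.univ ≤ ENNReal.ofReal M)
    (hq : κ * √M ≤ q) {F : β → ENNReal} (hF : Measurable F) (hF1 : ∫⁻ z, F z ^ 2 ∂ν ≤ 1)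
    {y : α → ℝ} (hy : Measurable y) (hyF : ∀ᵐ x ∂μ, ‖y x‖ₑ ≤ ∫⁻ z, F z * N x z ∂ν) :
    ∫⁻ x, ENNReal.ofReal (rexp (y x ^ 2)) ∂μ ≤
      ENNReal.ofReal (M * rexp 1 * garsiaConst (2 * q ^ 2 + 8 * q + 4)) := by
  have : IsFiniteMeasure μ := ⟨hμ.trans_lt ENNReal.ofReal_lt_top⟩
  have : IsFiniteMeasure ν := ⟨hν.trans_lt ENNReal.ofReal_lt_top⟩
  have hf1 : ∫⁻ τ in Set.Ioo 0 M, rearrangement ν F τ ^ 2 ≤ 1 :=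
    (lintegral_mono_set Set.Ioo_subset_Ioi_self).trans
      ((lintegral_rearrangement_sq hF).trans_le hF1)
  have hgarsia := isGarsiaSeq_setLIntegral_mul_oneilKernel
    (measurable_rearrangement (μ := ν) (F := F)) hM hN.nonneg hq hf1
  refine lintegral_exp_sq_le_of_forall_measure_le hy hM hμ (fun k => ?_) hgarsia.sum_exp_le
  set Ψ := ∫⁻ τ in Set.Ioo 0 M,
    rearrangement ν F τ * ENNReal.ofReal (oneilKernel (M * rexp (-(k : ℝ))) κ τ)
  have hΨ : Ψ ≠ ⊤ := ne_top_of_le_ne_top ENNReal.ofReal_ne_top <|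
    setLIntegral_mul_oneilKernel_le measurable_rearrangement hN.nonneg (by positivity) le_rfl
      (mul_le_of_le_one_right hM.le (exp_le_one_iff.2 (by simp))) hq hf1
  have honeil : rearrangement μ (fun x => ∫⁻ z, F z * N x z ∂ν) (M * rexp (-(k : ℝ))) ≤ Ψ :=
    (hN.rearrangement_lintegral_le hF (by positivity)).trans_eq
      (setLIntegral_Ioo_rearrangement_mul hν _).symm
  calc μ {x | Ψ.toReal < |y x|} ≤ μ {x | Ψ < ∫⁻ z, F z * N x z ∂ν} := by
        refine measure_mono_ae (hyF.mono fun x hx (hlt : Ψ.toReal < |y x|) => ?_)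
        refine lt_of_lt_of_le ?_ hx
        rwa [enorm_eq_ofReal_abs, ENNReal.lt_ofReal_iff_toReal_lt hΨ]
    _ ≤ ENNReal.ofReal (M * rexp (-(k : ℝ))) :=
        not_lt.1 fun hlt => honeil.not_gt (lt_rearrangement_iff.2 hlt)

/-! ### The ground state substitution -/

section Divergence

variable {E : Type*} [NormedAddCommGroup E] [NormedSpace ℝ E]

/-- The trial functions of the argument: `C¹` functions whose support is a compact subset
of `Ω`. -/
structure IsC1Test (Ω : Set E) (u : E → ℝ) : Prop where
  contDiff : ContDiff ℝ 1 u
  hasCompactSupport : HasCompactSupport u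
  tsupport_subset : tsupport u ⊆ Ω

lemma integrable_fderiv [MeasurableSpace E] [BorelSpace E] (μ : Measure E)
    [IsFiniteMeasureOnCompacts μ] {V : E → E} (hV : ContDiff ℝ 1 V) (hVc : HasCompactSupport V) :
    Integrable (fderiv ℝ V) μ :=
  (hV.continuous_fderiv one_ne_zero).integrable_of_hasCompactSupport (hVc.fderiv ℝ)

variable [FiniteDimensional ℝ E]

variable (E) in
/-- The trace of an endomorphism, as a continuous linear functional. -/
def traceCLM : (E →L[ℝ] E) →L[ℝ] ℝ :=
  LinearMap.toContinuousLinearMap (LinearMap.trace ℝ E ∘ₗ ContinuousLinearMap.coeLM ℝ)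

/-- The divergence of a vector field, as the trace of its derivative. -/
def divergence (V : E → E) (x : E) : ℝ :=
  traceCLM E (fderiv ℝ V x)

lemma traceCLM_smulRight (f : E →L[ℝ] ℝ) (v : E) : traceCLM E (f.smulRight v) = f v :=
  LinearMap.trace_smulRight (f : E →ₗ[ℝ] ℝ) v

lemma divergence_smul {f : E → ℝ} {V : E → E} {x : E}
    (hf : DifferentiableAt ℝ f x) (hV : DifferentiableAt ℝ V x) :
    divergence (fun y => f y • V y) x = f x * divergence V x + fderiv ℝ f x (V x) := by
  rw [divergence, fderiv_fun_smul hf hV, map_add, map_smul, traceCLM_smulRight, smul_eq_mul,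
    divergence]

lemma divergence_neg (V : E → E) (x : E) : divergence (fun y => -V y) x = -divergence V x := by
  rw [divergence, fderiv_fun_neg, map_neg, divergence]

lemma divergence_add {V W : E → E} {x : E} (hV : DifferentiableAt ℝ V x)
    (hW : DifferentiableAt ℝ W x) :
    divergence (fun y => V y + W y) x = divergence V x + divergence W x := by
  rw [divergence, fderiv_fun_add hV hW, map_add, divergence, divergence]

lemma divergence_sub_const (c x : E) :
    divergence (fun y => y - c) x = Module.finrank ℝ E := by
  rw [divergence, fderiv_sub_const, fderiv_fun_id]
  exact LinearMap.trace_id ℝ E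

lemma divergence_of_notMem_tsupport {V : E → E} {x : E} (hx : x ∉ tsupport V) :
    divergence V x = 0 := by
  have hfderiv : fderiv ℝ V x = 0 :=
    image_eq_zero_of_notMem_tsupport fun h => hx (tsupport_fderiv_subset ℝ h)
  rw [divergence, hfderiv, map_zero]

variable [MeasurableSpace E] [BorelSpace E]
  (μ : Measure E) [μ.IsAddHaarMeasure]

lemma integral_fderiv_eq_zero {V : E → E} (hV : ContDiff ℝ 1 V) (hVc : HasCompactSupport V) :
    ∫ x, fderiv ℝ V x ∂μ = 0 := by
  have hDV := integrable_fderiv μ hV hVc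
  ext v
  rw [ContinuousLinearMap.integral_apply hDV v]
  simpa using integral_smul_fderiv_eq_neg_fderiv_smul_of_integrable (μ := μ) (𝕜 := ℝ)
    (f := fun _ => (1 : ℝ)) (g := V) (v := v) (by simp)
    (by simpa using hDV.apply_continuousLinearMap v)
    (by simpa using hV.continuous.integrable_of_hasCompactSupport hVc)
    (fun _ _ => differentiableAt_const _) (fun x _ => hV.differentiable one_ne_zero x)

lemma integrable_divergence {V : E → E} (hV : ContDiff ℝ 1 V) (hVc : HasCompactSupport V) :
    Integrable (divergence V) μ :=
  (traceCLM E).integrable_comp (integrable_fderiv μ hV hVc)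

lemma integral_divergence_eq_zero {V : E → E} (hV : ContDiff ℝ 1 V) (hVc : HasCompactSupport V) :
    ∫ x, divergence V x ∂μ = 0 := by
  calc ∫ x, divergence V x ∂μ = traceCLM E (∫ x, fderiv ℝ V x ∂μ) :=
        (traceCLM E).integral_comp_comm (integrable_fderiv μ hV hVc)
    _ = 0 := by rw [integral_fderiv_eq_zero μ hV hVc, map_zero]

end Divergence

namespace IsC1Test

variable {E : Type*} [NormedAddCommGroup E] [InnerProductSpace ℝ E] {Ω : Set E}
  {u : E → ℝ}

lemma tsupport_sq_smul_subset (u : E → ℝ) (X : E → E) :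
    tsupport (fun x => u x ^ 2 • X x) ⊆ tsupport u :=
  closure_mono fun x hx hu => hx (by simp [hu])

lemma contDiff_sq_smul (hu : IsC1Test Ω u) (hΩ : IsOpen Ω) {X : E → E} (hX : ContDiffOn ℝ 1 X Ω) :
    ContDiff ℝ 1 fun x => u x ^ 2 • X x := by
  rw [← contMDiff_iff_contDiff]
  refine contMDiff_of_tsupport fun x hx => ContDiffAt.contMDiffAt ?_
  have hxΩ : x ∈ Ω := hu.tsupport_subset (tsupport_sq_smul_subset u X hx)
  exact (hu.contDiff.contDiffAt.pow 2).smul (hX.contDiffAt (hΩ.mem_nhds hxΩ))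

lemma integrable [MeasurableSpace E] [BorelSpace E] {μ : Measure E}
    [IsFiniteMeasureOnCompacts μ] (hu : IsC1Test Ω u) {φ : E → ℝ}
    (hφ : ContinuousOn φ Ω) (hφ0 : ∀ x, x ∉ tsupport u → φ x = 0) : Integrable φ μ :=
  (integrableOn_iff_integrable_of_support_subset
    (Function.support_subset_iff'.2 hφ0)).1
    ((hφ.mono hu.tsupport_subset).integrableOn_compact hu.hasCompactSupport)

variable [FiniteDimensional ℝ E]

lemma continuous_gradient (hu : IsC1Test Ω u) : Continuous (gradient u) :=
  (InnerProductSpace.toDual ℝ E).symm.continuous.comp (hu.contDiff.continuous_fderiv one_ne_zero)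

lemma gradient_eq_zero {x : E} (hx : x ∉ tsupport u) : gradient u x = 0 := by
  have hfderiv : fderiv ℝ u x = 0 :=
    image_eq_zero_of_notMem_tsupport fun h => hx (tsupport_fderiv_subset ℝ h)
  rw [gradient, hfderiv, map_zero]

lemma divergence_sq_smul (hu : IsC1Test Ω u) {X : E → E} {x : E} (hX : DifferentiableAt ℝ X x) :
    divergence (fun y => u y ^ 2 • X y) x =
      u x ^ 2 * divergence X x + 2 * u x * inner ℝ (gradient u x) (X x) := by
  have hdu : HasFDerivAt u (fderiv ℝ u x) x :=
    (hu.contDiff.differentiable one_ne_zero x).hasFDerivAt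
  rw [divergence_smul (hdu.pow 2).differentiableAt hX, (hdu.pow 2).fderiv, inner_gradient_left]
  simp

variable [MeasurableSpace E] [BorelSpace E] {μ : Measure E}

/-- The ground state substitution, with `X` in the role of the logarithmic gradient of a positive
function. -/
lemma setIntegral_norm_gradient_sq [μ.IsAddHaarMeasure] (hu : IsC1Test Ω u) (hΩ : IsOpen Ω)
    {X : E → E} (hX : ContDiffOn ℝ 1 X Ω) :
    ∫ x in Ω, ‖gradient u x‖ ^ 2 ∂μ =
      ∫ x in Ω, (‖gradient u x - u x • X x‖ ^ 2 - (divergence X x + ‖X x‖ ^ 2) * u x ^ 2) ∂μ := by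
  set V : E → E := fun x => u x ^ 2 • X x
  have hV : ContDiff ℝ 1 V := hu.contDiff_sq_smul hΩ hX
  have hVu : tsupport V ⊆ tsupport u := tsupport_sq_smul_subset u X
  have hVc : HasCompactSupport V :=
    hu.hasCompactSupport.of_isClosed_subset (isClosed_tsupport V) hVu
  have hV0 : ∀ x, x ∉ Ω → divergence V x = 0 := fun x hx =>
    divergence_of_notMem_tsupport fun h => hx (hu.tsupport_subset (hVu h))
  have hgrad : Integrable (fun x => ‖gradient u x‖ ^ 2) μ :=
    hu.integrable (hu.continuous_gradient.norm.pow 2).continuousOn fun x hx => by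
      simp [gradient_eq_zero hx]
  calc ∫ x in Ω, ‖gradient u x‖ ^ 2 ∂μ
      = ∫ x in Ω, ‖gradient u x‖ ^ 2 ∂μ - ∫ x in Ω, divergence V x ∂μ := by
        rw [setIntegral_eq_integral_of_forall_compl_eq_zero hV0,
          integral_divergence_eq_zero μ hV hVc, sub_zero]
    _ = ∫ x in Ω, (‖gradient u x‖ ^ 2 - divergence V x) ∂μ :=
        (integral_sub hgrad.integrableOn (integrable_divergence μ hV hVc).integrableOn).symm
    _ = _ := setIntegral_congr_fun hΩ.measurableSet fun x hx => by
        simp only [V, hu.divergence_sq_smul ((hX.contDiffAt (hΩ.mem_nhds hx)).differentiableAt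
          one_ne_zero), norm_sub_sq_real, norm_smul, inner_smul_right, mul_pow, Real.norm_eq_abs,
          sq_abs]
        ring

end IsC1Test

/-! ### The ground state of the Hardy operator on the disc -/

section GroundState

variable {E : Type*} [NormedAddCommGroup E]

lemma one_sub_norm_sq_pos {x : E} (hx : x ∈ Metric.ball 0 1) : 0 < 1 - ‖x‖ ^ 2 := by
  rw [mem_ball_zero_iff] at hx
  nlinarith [norm_nonneg x]

lemma norm_sub_pos_of_mem_ball {b x : E} (hb : 1 < ‖b‖) (hx : x ∈ Metric.ball 0 1) :
    0 < ‖x - b‖ := by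
  rw [mem_ball_zero_iff] at hx
  rw [norm_pos_iff, sub_ne_zero]
  rintro rfl
  exact hx.not_gt hb

/-- For `b` outside the closed unit disc, a positive strict supersolution of the Hardy operator
`-Δ - (1 - |x|²)⁻²`. -/
def groundState (b x : E) : ℝ := √((1 - ‖x‖ ^ 2) / ‖x - b‖ ^ 2)

/-- The excess `(-Δψ)/ψ - (1 - |x|²)⁻²` of `ψ = groundState b` in dimension two. -/
def gain (b x : E) : ℝ := (‖b‖ ^ 2 - 1) / ((1 - ‖x‖ ^ 2) * ‖x - b‖ ^ 2)

lemma groundState_pos {b x : E} (hb : 1 < ‖b‖) (hx : x ∈ Metric.ball 0 1) :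
    0 < groundState b x := by
  have := one_sub_norm_sq_pos hx
  have := norm_sub_pos_of_mem_ball hb hx
  unfold groundState
  positivity

lemma gain_pos {b x : E} (hb : 1 < ‖b‖) (hx : x ∈ Metric.ball 0 1) : 0 < gain b x := by
  have := one_sub_norm_sq_pos hx
  have := norm_sub_pos_of_mem_ball hb hx
  have : 0 < ‖b‖ ^ 2 - 1 := by nlinarith
  unfold gain
  positivity

lemma continuousOn_gain {b : E} (hb : 1 < ‖b‖) : ContinuousOn (gain b) (Metric.ball 0 1) := by
  unfold gain
  refine ContinuousOn.div (by fun_prop) (by fun_prop) fun x hx => ?_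
  have := one_sub_norm_sq_pos hx
  have := norm_sub_pos_of_mem_ball hb hx
  positivity

variable [InnerProductSpace ℝ E]

/-- The logarithmic gradient `∇ψ/ψ` of `ψ = groundState b`. -/
def logGrad (b x : E) : E := -((1 - ‖x‖ ^ 2)⁻¹ • x + (‖x - b‖ ^ 2)⁻¹ • (x - b))

lemma hasFDerivAt_inv_one_sub_norm_sq {x : E} (hx : x ∈ Metric.ball 0 1) :
    HasFDerivAt (fun y : E => (1 - ‖y‖ ^ 2)⁻¹)
      ((2 * ((1 - ‖x‖ ^ 2)⁻¹) ^ 2) • innerSL ℝ x) x := by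
  have hbase := (hasFDerivAt_id x).norm_sq.const_sub 1
  refine ((hasDerivAt_inv (one_sub_norm_sq_pos hx).ne').comp_hasFDerivAt x hbase).congr_fderiv ?_
  ext v
  simp only [id_eq, ContinuousLinearMap.comp_id, smul_neg, neg_smul, neg_neg, smul_apply,
    coe_innerSL_apply, nsmul_eq_mul, Nat.cast_ofNat, smul_eq_mul, inv_pow]
  ring

lemma hasFDerivAt_inv_norm_sub_sq {b x : E} (hxb : 0 < ‖x - b‖) :
    HasFDerivAt (fun y : E => (‖y - b‖ ^ 2)⁻¹)
      ((-2 * ((‖x - b‖ ^ 2)⁻¹) ^ 2) • innerSL ℝ (x - b)) x := by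
  have hbase := ((hasFDerivAt_id x).sub_const b).norm_sq
  refine ((hasDerivAt_inv (pow_pos hxb 2).ne').comp_hasFDerivAt x hbase).congr_fderiv ?_
  ext v
  simp only [id_eq, map_sub, ContinuousLinearMap.comp_id, neg_smul, neg_apply, smul_apply,
    sub_apply, coe_innerSL_apply, nsmul_eq_mul, Nat.cast_ofNat, smul_eq_mul, inv_pow, neg_mul,
    neg_inj]
  ring

lemma hasFDerivAt_groundState {b x : E} (hb : 1 < ‖b‖) (hx : x ∈ Metric.ball 0 1) :
    HasFDerivAt (groundState b) (groundState b x • innerSL ℝ (logGrad b x)) x := by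
  have h1 := one_sub_norm_sq_pos hx
  have h2 := norm_sub_pos_of_mem_ball hb hx
  have hψ := groundState_pos hb hx
  have hψ_sq : groundState b x ^ 2 = (1 - ‖x‖ ^ 2) / ‖x - b‖ ^ 2 := sq_sqrt (by positivity)
  have hquot := ((hasFDerivAt_id x).norm_sq.const_sub 1).mul (hasFDerivAt_inv_norm_sub_sq h2)
  refine (hquot.sqrt (mul_pos h1 (inv_pos.2 (pow_pos h2 2))).ne').congr_fderiv ?_
  ext v
  have hsqrt : √((1 - ‖x‖ ^ 2) * (‖x - b‖ ^ 2)⁻¹) = groundState b x := rfl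
  simp only [Pi.mul_apply, id, hsqrt]
  simp only [one_div, mul_inv_rev, inv_pow, neg_mul, map_sub, neg_smul, smul_neg,
    ContinuousLinearMap.comp_id, smul_add, add_apply, neg_apply, smul_apply, sub_apply,
    coe_innerSL_apply, smul_eq_mul, nsmul_eq_mul, Nat.cast_ofNat, logGrad, neg_add_rev, map_add,
    map_neg, map_smul]
  field_simp
  rw [hψ_sq]
  field_simp

lemma contDiffOn_logGrad {b : E} (hb : 1 < ‖b‖) : ContDiffOn ℝ 1 (logGrad b) (Metric.ball 0 1) := by
  unfold logGrad
  exact (ContDiffOn.add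
    (((contDiffOn_const.sub (contDiffOn_id.norm_sq ℝ)).inv
      fun x hx => (one_sub_norm_sq_pos hx).ne').smul contDiffOn_id)
    ((((contDiffOn_id.sub contDiffOn_const).norm_sq ℝ).inv
      fun x hx => (pow_pos (norm_sub_pos_of_mem_ball hb hx) 2).ne').smul
        (contDiffOn_id.sub contDiffOn_const))).neg

lemma norm_logGrad_sq {b x : E} (hb : 1 < ‖b‖) (hx : x ∈ Metric.ball 0 1) :
    ‖logGrad b x‖ ^ 2 = (1 - ‖x‖ ^ 2)⁻¹ ^ 2 - gain b x := by
  have h1 := one_sub_norm_sq_pos hx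
  have h2 := norm_sub_pos_of_mem_ball hb hx
  have hinner : 2 * inner ℝ x (x - b) = ‖x‖ ^ 2 + ‖x - b‖ ^ 2 - ‖b‖ ^ 2 := by
    have := norm_sub_sq_real x (x - b)
    rw [sub_sub_cancel] at this
    linarith
  have hexpand : ‖logGrad b x‖ ^ 2 = ((1 - ‖x‖ ^ 2)⁻¹) ^ 2 * ‖x‖ ^ 2 +
      (1 - ‖x‖ ^ 2)⁻¹ * (‖x - b‖ ^ 2)⁻¹ * (2 * inner ℝ x (x - b)) +
      ((‖x - b‖ ^ 2)⁻¹) ^ 2 * ‖x - b‖ ^ 2 := by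
    rw [logGrad, norm_neg, norm_add_sq_real]
    simp only [norm_smul, mul_pow, inner_smul_left, inner_smul_right, Real.norm_eq_abs, sq_abs,
      conj_trivial]
    ring
  rw [hexpand, hinner, gain]
  field_simp
  ring

lemma divergence_logGrad [FiniteDimensional ℝ E] {b x : E} (hb : 1 < ‖b‖)
    (hx : x ∈ Metric.ball 0 1) :
    divergence (logGrad b) x = -(Module.finrank ℝ E * (1 - ‖x‖ ^ 2)⁻¹ +
      2 * ((1 - ‖x‖ ^ 2)⁻¹) ^ 2 * ‖x‖ ^ 2) - (Module.finrank ℝ E - 2) * (‖x - b‖ ^ 2)⁻¹ := by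
  have h2 := norm_sub_pos_of_mem_ball hb hx
  have hid : HasFDerivAt (fun y : E => y) (ContinuousLinearMap.id ℝ E) x := hasFDerivAt_id x
  have hsub := hid.sub_const b
  have hS := hasFDerivAt_inv_one_sub_norm_sq hx
  have hT := hasFDerivAt_inv_norm_sub_sq h2
  have hdiv_id : divergence (fun y : E => y) x = Module.finrank ℝ E := by
    simpa using divergence_sub_const 0 x
  have hT_cancel : ((‖x - b‖ ^ 2)⁻¹) ^ 2 * ‖x - b‖ ^ 2 = (‖x - b‖ ^ 2)⁻¹ := by field_simp
  unfold logGrad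
  rw [divergence_neg, divergence_add (hS.fun_smul hid).differentiableAt
      (hT.fun_smul hsub).differentiableAt,
    divergence_smul hS.differentiableAt hid.differentiableAt,
    divergence_smul hT.differentiableAt hsub.differentiableAt, hdiv_id, divergence_sub_const,
    hS.fderiv, hT.fderiv]
  simp only [smul_apply, innerSL_apply_apply, real_inner_self_eq_norm_sq,
    smul_eq_mul]
  linear_combination 2 * hT_cancel

lemma divergence_logGrad_add_norm_sq [FiniteDimensional ℝ E] (hE : Module.finrank ℝ E = 2)
    {b x : E} (hb : 1 < ‖b‖) (hx : x ∈ Metric.ball 0 1) :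
    divergence (logGrad b) x + ‖logGrad b x‖ ^ 2 = -(((1 - ‖x‖ ^ 2) ^ 2)⁻¹ + gain b x) := by
  have h1 := (one_sub_norm_sq_pos hx).ne'
  rw [divergence_logGrad hb hx, norm_logGrad_sq hb hx, hE]
  push_cast
  field_simp
  ring

end GroundState

namespace IsC1Test

variable {u : E2 → ℝ}

lemma integrable_groundState_energy (hu : IsC1Test B2 u) {b : E2} (hb : 1 < ‖b‖) :
    Integrable fun x => ‖gradient u x - u x • logGrad b x‖ ^ 2 + gain b x * u x ^ 2 := by
  have hu_cont : Continuous u := hu.contDiff.continuous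
  have hgrad : Continuous (gradient u) := hu.continuous_gradient
  have hX : ContinuousOn (logGrad b) B2 := (contDiffOn_logGrad hb).continuousOn
  have hgain : ContinuousOn (gain b) B2 := continuousOn_gain hb
  exact hu.integrable (by fun_prop) fun x hx => by
    simp [image_eq_zero_of_notMem_tsupport hx, gradient_eq_zero hx]

lemma integrable_hardy_potential (hu : IsC1Test B2 u) :
    Integrable fun x => u x ^ 2 / (1 - ‖x‖ ^ 2) ^ 2 := by
  refine hu.integrable (ContinuousOn.div ?_ (by fun_prop) fun x hx =>
    (pow_pos (one_sub_norm_sq_pos hx) 2).ne') fun x hx => by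
      simp [image_eq_zero_of_notMem_tsupport hx]
  exact (hu.contDiff.continuous.pow 2).continuousOn

lemma hardy_eq_setIntegral (hu : IsC1Test B2 u) {b : E2} (hb : 1 < ‖b‖) :
    H u = ∫ x in B2, (‖gradient u x - u x • logGrad b x‖ ^ 2 + gain b x * u x ^ 2) := by
  rw [H, sub_eq_iff_eq_add, ← integral_add (hu.integrable_groundState_energy hb).integrableOn
    hu.integrable_hardy_potential.integrableOn,
    hu.setIntegral_norm_gradient_sq Metric.isOpen_ball (contDiffOn_logGrad hb)]
  refine setIntegral_congr_fun measurableSet_ball fun x hx => ?_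
  simp only [divergence_logGrad_add_norm_sq finrank_euclideanSpace_fin hb hx]
  ring

lemma hardy_pos (hu : IsC1Test B2 u) (h0 : u ≠ 0) : 0 < H u := by
  obtain ⟨b, hb⟩ : ∃ b : E2, 1 < ‖b‖ := NormedSpace.exists_lt_norm ℝ E2 1
  have hpos : ∀ x ∈ B2, u x ≠ 0 →
      0 < ‖gradient u x - u x • logGrad b x‖ ^ 2 + gain b x * u x ^ 2 := fun x hx hux => by
    have := gain_pos hb hx
    positivity
  rw [hu.hardy_eq_setIntegral hb, setIntegral_pos_iff_support_of_nonneg_ae]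
  · obtain ⟨x, hx⟩ := Function.ne_iff.1 h0
    have hopen : IsOpen (Function.support u ∩ B2) :=
      hu.contDiff.continuous.isOpen_support.inter Metric.isOpen_ball
    refine (hopen.measure_pos volume ⟨x, hx, hu.tsupport_subset (subset_tsupport u hx)⟩).trans_le
      (measure_mono fun y hy => ⟨(hpos y hy.2 hy.1).ne', hy.2⟩)
  · filter_upwards [ae_restrict_mem (measurableSet_ball : MeasurableSet B2)] with x hx
    have := gain_pos hb hx
    positivity
  · exact (hu.integrable_groundState_energy hb).integrableOn

end IsC1Test

/-! ### Polar coordinates and the Newton kernel -/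

section Polar

variable {E : Type*} [NormedAddCommGroup E] [NormedSpace ℝ E] [FiniteDimensional ℝ E]
  [Nontrivial E] [MeasurableSpace E] [BorelSpace E] (μ : Measure E) [μ.IsAddHaarMeasure]

lemma lintegral_volumeIoiPow (n : ℕ) {f : ℝ → ENNReal} (hf : Measurable f) :
    ∫⁻ r : Set.Ioi (0 : ℝ), f r ∂(Measure.volumeIoiPow n) =
      ∫⁻ r in Set.Ioi (0 : ℝ), ENNReal.ofReal (r ^ n) * f r := by
  rw [Measure.volumeIoiPow, lintegral_withDensity_eq_lintegral_mul _ (by fun_prop) (by fun_prop),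
    ← lintegral_subtype_comap measurableSet_Ioi]
  rfl

lemma lintegral_eq_lintegral_toSphere {g : E → ENNReal} (hg : Measurable g) :
    ∫⁻ y, g y ∂μ = ∫⁻ θ, (∫⁻ r in Set.Ioi (0 : ℝ),
      ENNReal.ofReal (r ^ (Module.finrank ℝ E - 1)) * g (r • θ.1)) ∂μ.toSphere := by
  have hgp : Measurable fun p : Metric.sphere (0 : E) 1 × Set.Ioi (0 : ℝ) => g (p.2.1 • p.1.1) := by
    fun_prop
  calc ∫⁻ y, g y ∂μ = ∫⁻ y : ({0}ᶜ : Set E), g y ∂(μ.comap (↑)) := by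
        rw [lintegral_subtype_comap (measurableSet_singleton _).compl, restrict_compl_singleton]
    _ = ∫⁻ p, g (p.2.1 • p.1.1)
          ∂(μ.toSphere.prod (Measure.volumeIoiPow (Module.finrank ℝ E - 1))) := by
        rw [← μ.measurePreserving_homeomorphUnitSphereProd.lintegral_comp_emb
          (Homeomorph.measurableEmbedding _)]
        refine lintegral_congr fun y => ?_
        congr 1
        exact congr_arg Subtype.val ((homeomorphUnitSphereProd E).symm_apply_apply y).symm
    _ = _ := by
        rw [lintegral_prod _ hgp.aemeasurable]
        exact lintegral_congr fun θ => lintegral_volumeIoiPow _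
          (f := fun r => g (r • θ.1)) (by fun_prop)

lemma setLIntegral_ball_eq_lintegral_toSphere (x : E) (R : ℝ) {g : E → ENNReal}
    (hg : Measurable g) :
    ∫⁻ y in Metric.ball x R, g y ∂μ = ∫⁻ θ, (∫⁻ r in Set.Ioo 0 R,
      ENNReal.ofReal (r ^ (Module.finrank ℝ E - 1)) * g (x + r • θ.1)) ∂μ.toSphere := by
  rw [← lintegral_indicator measurableSet_ball, ← lintegral_add_left_eq_self _ x,
    lintegral_eq_lintegral_toSphere μ (g := fun y => (Metric.ball x R).indicator g (x + y))
      ((hg.indicator measurableSet_ball).comp (measurable_const_add x))]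
  refine lintegral_congr fun θ => ?_
  rw [← lintegral_indicator measurableSet_Ioi, ← lintegral_indicator measurableSet_Ioo]
  refine lintegral_congr fun r => ?_
  by_cases h0 : 0 < r
  · by_cases hR : r < R <;> simp [Set.indicator, h0, hR, norm_smul, abs_of_pos]
  · simp [Set.indicator, h0]

end Polar

lemma toSphere_volume_univ_E2 :
    (volume : Measure E2).toSphere Set.univ = ENNReal.ofReal (2 * π) := by
  rw [Measure.toSphere_apply_univ, finrank_euclideanSpace_fin, EuclideanSpace.volume_ball_fin_two,
    ENNReal.ofReal_mul zero_le_two]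
  simp

lemma setLIntegral_Ioo_one_sub_div {ρ : ℝ} (hρ : 0 < ρ) :
    ∫⁻ r in Set.Ioo 0 ρ, ENNReal.ofReal (1 - r / ρ) = ENNReal.ofReal (ρ / 2) := by
  rw [restrict_Ioo_eq_restrict_Ioc, ← ofReal_integral_eq_lintegral_ofReal,
    ← intervalIntegral.integral_of_le hρ.le]
  · congr 1
    simp only [intervalIntegrable_const, intervalIntegral.intervalIntegrable_id,
      IntervalIntegrable.div_const, intervalIntegral.integral_sub, intervalIntegral.integral_const,
      sub_zero, smul_eq_mul, mul_one, intervalIntegral.integral_div, integral_id, ne_eq,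
      OfNat.ofNat_ne_zero, not_false_eq_true, zero_pow]
    field_simp
    ring
  · exact Continuous.integrableOn_Ioc (by fun_prop)
  · filter_upwards [ae_restrict_mem measurableSet_Ioc] with r hr
    exact sub_nonneg.2 ((div_le_one hρ).2 hr.2)

lemma setLIntegral_ball_one_div_dist_sub (x : E2) {ρ : ℝ} (hρ : 0 < ρ) :
    ∫⁻ y in Metric.ball x ρ, ENNReal.ofReal (1 / dist y x - 1 / ρ) = ENNReal.ofReal (π * ρ) := by
  have hray (θ : Metric.sphere (0 : E2) 1) :
      ∫⁻ r in Set.Ioo 0 ρ, ENNReal.ofReal (r ^ (Module.finrank ℝ E2 - 1)) *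
        ENNReal.ofReal (1 / dist (x + r • θ.1) x - 1 / ρ) = ENNReal.ofReal (ρ / 2) := by
    rw [← setLIntegral_Ioo_one_sub_div hρ]
    refine setLIntegral_congr_fun measurableSet_Ioo fun r hr => ?_
    have hr0 := hr.1.ne'
    simp only [finrank_euclideanSpace_fin, dist_self_add_left, norm_smul, norm_eq_of_mem_sphere,
      norm_eq_abs, abs_of_pos hr.1, mul_one, Nat.add_one_sub_one, pow_one,
      ← ENNReal.ofReal_mul hr.1.le]
    congr 1
    field_simp
  rw [setLIntegral_ball_eq_lintegral_toSphere _ _ _ (by fun_prop)]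
  simp only [hray, lintegral_const, toSphere_volume_univ_E2]
  rw [← ENNReal.ofReal_mul (by positivity)]
  congr 1
  ring

-- The extremal set of given area is the disc centred at `x`.
lemma setLIntegral_one_div_dist_le (x : E2) {G : Set E2} {g : ℝ} (hg : 0 ≤ g)
    (hG : volume G ≤ ENNReal.ofReal g) :
    ∫⁻ y in G, ENNReal.ofReal (1 / dist y x) ≤ ENNReal.ofReal (2 * √π * √g) := by
  rcases hg.eq_or_lt with rfl | hg
  · rw [Measure.restrict_eq_zero.2 (by simpa using hG)]
    simp
  obtain ⟨ρ, hρ, hρg⟩ : ∃ ρ > 0, √g = √π * ρ := ⟨√g / √π, by positivity, by field_simp⟩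
  have hpt (y : E2) : ENNReal.ofReal (1 / dist y x) ≤ ENNReal.ofReal (1 / ρ) +
      (Metric.ball x ρ).indicator (fun y => ENNReal.ofReal (1 / dist y x - 1 / ρ)) y := by
    by_cases h : dist y x < ρ
    · rw [Set.indicator_of_mem (Metric.mem_ball.2 h)]
      exact (ENNReal.ofReal_add_le.trans' (by rw [add_sub_cancel]))
    · exact le_add_right (ENNReal.ofReal_le_ofReal (one_div_le_one_div_of_le hρ (not_lt.1 h)))
  calc ∫⁻ y in G, ENNReal.ofReal (1 / dist y x)
      ≤ ∫⁻ y in G, (ENNReal.ofReal (1 / ρ) +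
          (Metric.ball x ρ).indicator (fun y => ENNReal.ofReal (1 / dist y x - 1 / ρ)) y) :=
        lintegral_mono hpt
    _ = ENNReal.ofReal (1 / ρ) * volume G + ∫⁻ y in G,
          (Metric.ball x ρ).indicator (fun y => ENNReal.ofReal (1 / dist y x - 1 / ρ)) y := by
        rw [lintegral_add_left measurable_const, setLIntegral_const]
    _ ≤ ENNReal.ofReal (1 / ρ) * ENNReal.ofReal g + ENNReal.ofReal (π * ρ) := by
        rw [← setLIntegral_ball_one_div_dist_sub x hρ, ← lintegral_indicator measurableSet_ball]
        gcongr
        exact Measure.restrict_le_self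
    _ = ENNReal.ofReal (2 * √π * √g) := by
        rw [← ENNReal.ofReal_mul (by positivity),
          ← ENNReal.ofReal_add (by positivity) (by positivity)]
        congr 1
        nth_rewrite 1 [← sq_sqrt hg.le]
        rw [hρg, mul_pow, sq_sqrt pi_pos.le]
        field_simp
        rw [sq_sqrt pi_pos.le]
        ring

/-! ### Whitney discs -/

section WhitneyDisc

variable {E : Type*} [NormedAddCommGroup E] {a b x y : E} {R : ℝ}

/-- The disc `ball a (4 * R)` touches the unit sphere from inside, and `b` is a point outside the
unit disc at distance comparable to `R` from `a`, used as pole of the ground state. -/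
structure IsWhitneyDisc (a b : E) (R : ℝ) : Prop where
  pos : 0 < R
  norm_center : ‖a‖ = 1 - 4 * R
  norm_pole : ‖b‖ = 1 + 4 * R
  norm_sub : ‖a - b‖ = 8 * R

lemma exists_isWhitneyDisc [NormedSpace ℝ E] [Nontrivial E] (ha : a ∈ Metric.ball 0 1) :
    ∃ b, IsWhitneyDisc a b ((1 - ‖a‖) / 4) := by
  rw [mem_ball_zero_iff] at ha
  obtain ⟨e, he, hae⟩ : ∃ e : E, ‖e‖ = 1 ∧ a = ‖a‖ • e := by
    rcases eq_or_ne a 0 with rfl | h0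
    · obtain ⟨e, he⟩ := NormedSpace.sphere_nonempty_rclike ℝ (E := E) zero_le_one
      exact ⟨e, by simpa using he, by simp⟩
    · exact ⟨‖a‖⁻¹ • a, norm_smul_inv_norm h0, (smul_inv_smul₀ (norm_ne_zero_iff.2 h0) a).symm⟩
  refine ⟨(2 - ‖a‖) • e, by linarith, by ring, ?_, ?_⟩
  · rw [norm_smul, he, norm_of_nonneg (by linarith)]
    ring
  · nth_rewrite 1 [hae]
    rw [← sub_smul, norm_smul, he, norm_of_nonpos (by linarith)]
    ring

namespace IsWhitneyDisc

lemma one_lt_norm_pole (h : IsWhitneyDisc a b R) : 1 < ‖b‖ := by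
  linarith [h.pos, h.norm_pole]

lemma norm_lt (h : IsWhitneyDisc a b R) (hy : y ∈ Metric.ball a (2 * R)) :
    ‖y‖ < 1 - 2 * R := by
  rw [mem_ball_iff_norm] at hy
  linarith [norm_le_norm_add_norm_sub' y a, h.norm_center]

lemma ball_subset (h : IsWhitneyDisc a b R) : Metric.ball a (2 * R) ⊆ Metric.ball 0 1 := by
  intro y hy
  rw [mem_ball_zero_iff]
  linarith [h.norm_lt hy, h.pos]

lemma two_mul_le_one_sub_norm_sq (h : IsWhitneyDisc a b R) (hy : y ∈ Metric.ball a (2 * R)) :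
    2 * R ≤ 1 - ‖y‖ ^ 2 := by
  nlinarith [h.norm_lt hy, h.pos, norm_nonneg y]

lemma inv_sq_le_gain (h : IsWhitneyDisc a b R) (hy : y ∈ Metric.ball a (2 * R)) :
    ((13 * R) ^ 2)⁻¹ ≤ gain b y := by
  have hR := h.pos
  have hy_pole := norm_sub_pos_of_mem_ball h.one_lt_norm_pole (h.ball_subset hy)
  have hy_sq := one_sub_norm_sq_pos (h.ball_subset hy)
  rw [mem_ball_iff_norm] at hy
  have hy_sq_le : 1 - ‖y‖ ^ 2 ≤ 12 * R := by
    nlinarith [norm_le_norm_add_norm_sub y a, h.norm_center, norm_nonneg y]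
  have hy_pole_le : ‖y - b‖ ≤ 10 * R := by
    linarith [norm_sub_le_norm_sub_add_norm_sub y a b, h.norm_sub]
  have hb_le : 8 * R ≤ ‖b‖ ^ 2 - 1 := by
    rw [h.norm_pole]
    nlinarith
  calc ((13 * R) ^ 2)⁻¹ ≤ 8 * R / (12 * R * (10 * R) ^ 2) := by
        rw [inv_eq_one_div, div_le_div_iff₀ (by positivity) (by positivity)]
        nlinarith [pow_pos hR 3]
    _ ≤ gain b y := by
        unfold gain
        gcongr
        linarith

lemma mem_ball_of_dist_le (hx : x ∈ Metric.ball a R) (hxy : dist y x ≤ R) :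
    y ∈ Metric.ball a (2 * R) := by
  rw [Metric.mem_ball] at hx ⊢
  linarith [dist_triangle y x a]

lemma norm_sub_pole_le (h : IsWhitneyDisc a b R) (hx : x ∈ Metric.ball a R) :
    ‖y - b‖ ≤ (1 + dist y x / R) * ‖x - b‖ := by
  have hR := h.pos
  rw [mem_ball_iff_norm'] at hx
  have hx_pole : R ≤ ‖x - b‖ := by
    linarith [norm_sub_le_norm_sub_add_norm_sub a x b, h.norm_sub]
  have hdist : dist y x ≤ dist y x / R * ‖x - b‖ := by
    rw [div_mul_eq_mul_div, le_div_iff₀ hR]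
    gcongr
  have := norm_sub_le_norm_sub_add_norm_sub y x b
  rw [← dist_eq_norm y x] at this
  linarith

lemma one_sub_norm_sq_le (h : IsWhitneyDisc a b R) (hx : x ∈ Metric.ball a R)
    (hxy : dist y x ≤ R) : 1 - ‖x‖ ^ 2 ≤ (1 + dist y x / R) * (1 - ‖y‖ ^ 2) := by
  have hR := h.pos
  have hy := mem_ball_of_dist_le hx hxy
  have hdist : 2 * dist y x ≤ dist y x / R * (1 - ‖y‖ ^ 2) := by
    rw [div_mul_eq_mul_div, le_div_iff₀ hR, mul_comm (2 : ℝ), mul_assoc]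
    gcongr
    exact h.two_mul_le_one_sub_norm_sq hy
  have hx_lt := h.norm_lt (Metric.ball_subset_ball (by linarith) hx)
  have := norm_le_norm_add_norm_sub' y x
  rw [← dist_eq_norm] at this
  nlinarith [h.norm_lt hy, norm_nonneg x, norm_nonneg y, dist_nonneg (x := y) (y := x)]

lemma groundState_div_le (h : IsWhitneyDisc a b R) (hx : x ∈ Metric.ball a R)
    (hxy : dist y x ≤ R) : groundState b x / groundState b y ≤ (1 + dist y x / R) ^ 2 := by
  have hR := h.pos
  have hxB := h.ball_subset (Metric.ball_subset_ball (by linarith) hx)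
  have hyB := h.ball_subset (mem_ball_of_dist_le hx hxy)
  have hx_sq := one_sub_norm_sq_pos hxB
  have hy_sq := one_sub_norm_sq_pos hyB
  have hx_pole := norm_sub_pos_of_mem_ball h.one_lt_norm_pole hxB
  have hy_pole := norm_sub_pos_of_mem_ball h.one_lt_norm_pole hyB
  have hpole := h.norm_sub_pole_le (y := y) hx
  have hsq := h.one_sub_norm_sq_le hx hxy
  set q := 1 + dist y x / R
  have hq : 1 ≤ q := le_add_of_nonneg_right (by positivity)
  rw [groundState, groundState, ← sqrt_div (by positivity)]
  refine sqrt_le_iff.2 ⟨by positivity, ?_⟩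
  rw [div_div_div_eq, div_le_iff₀ (by positivity)]
  calc (1 - ‖x‖ ^ 2) * ‖y - b‖ ^ 2 ≤ (q * (1 - ‖y‖ ^ 2)) * (q * ‖x - b‖) ^ 2 := by gcongr
    _ = q ^ 3 * (‖x - b‖ ^ 2 * (1 - ‖y‖ ^ 2)) := by ring
    _ ≤ q ^ 4 * (‖x - b‖ ^ 2 * (1 - ‖y‖ ^ 2)) := by gcongr; norm_num
    _ = (q ^ 2) ^ 2 * (‖x - b‖ ^ 2 * (1 - ‖y‖ ^ 2)) := by ring

end IsWhitneyDisc

end WhitneyDisc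

/-! ### The potential estimate -/

section Potential

lemma enorm_le_lintegral_cutoff_deriv {f f' : ℝ → ℝ} {R : ℝ} (hR : 0 < R)
    (hf : ∀ r ∈ Set.Icc 0 R, HasDerivAt f (f' r) r) (hf' : ContinuousOn f' (Set.Icc 0 R)) :
    ‖f 0‖ₑ ≤ ∫⁻ r in Set.Ioo 0 R,
      ‖-(2 * r / R ^ 2) * f r + (1 - (r / R) ^ 2) * f' r‖ₑ := by
  have hcut (r : ℝ) : HasDerivAt (fun t : ℝ => 1 - (t / R) ^ 2) (-(2 * r / R ^ 2)) r := by
    refine ((((hasDerivAt_id r).div_const R).fun_pow 2).const_sub 1).congr_deriv ?_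
    simp only [Nat.cast_ofNat, id_eq, Nat.add_one_sub_one, pow_one, one_div, neg_inj]
    field_simp
  have hcont : ContinuousOn (fun r => -(2 * r / R ^ 2) * f r + (1 - (r / R) ^ 2) * f' r)
      (Set.Icc 0 R) := by
    have : ContinuousOn f (Set.Icc 0 R) := fun r hr => (hf r hr).continuousAt.continuousWithinAt
    fun_prop
  have hftc : ∫ r in (0 : ℝ)..R, (-(2 * r / R ^ 2) * f r + (1 - (r / R) ^ 2) * f' r) = -f 0 := by
    rw [intervalIntegral.integral_eq_sub_of_hasDerivAt
      (fun r hr => (hcut r).fun_mul (hf r (by rwa [Set.uIcc_of_le hR.le] at hr)))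
      (hcont.intervalIntegrable_of_Icc hR.le)]
    simp [hR.ne']
  rw [← enorm_neg, ← hftc, intervalIntegral.integral_of_le hR.le, ← restrict_Ioo_eq_restrict_Ioc]
  exact enorm_integral_le_lintegral_enorm _

variable {E : Type*} [NormedAddCommGroup E] [InnerProductSpace ℝ E]
  {Ω : Set E} {u : E → ℝ} {a b x : E} {R : ℝ}

lemma ray_mem_ball {θ : E} (hθ : ‖θ‖ = 1) (h : IsWhitneyDisc a b R) (hx : x ∈ Metric.ball a R)
    {r : ℝ} (hr : r ∈ Set.Icc 0 R) : x + r • θ ∈ Metric.ball 0 1 := by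
  refine h.ball_subset (IsWhitneyDisc.mem_ball_of_dist_le hx ?_)
  rw [dist_self_add_left, norm_smul, hθ, mul_one, norm_of_nonneg hr.1]
  exact hr.2

variable [FiniteDimensional ℝ E]

lemma hasFDerivAt_div_groundState (hu : DifferentiableAt ℝ u x) (hb : 1 < ‖b‖)
    (hx : x ∈ Metric.ball 0 1) :
    HasFDerivAt (fun y => u y / groundState b y)
      ((groundState b x)⁻¹ • innerSL ℝ (gradient u x - u x • logGrad b x)) x := by
  have hψ := groundState_pos hb hx
  have hu' : HasFDerivAt u (innerSL ℝ (gradient u x)) x := hu.hasGradientAt.hasFDerivAt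
  have hψ_inv := (hasDerivAt_inv hψ.ne').comp_hasFDerivAt x (hasFDerivAt_groundState hb hx)
  refine (hu'.fun_mul hψ_inv).congr_fderiv ?_
  ext v
  simp only [add_apply, smul_apply, sub_apply, innerSL_apply_apply, smul_eq_mul, map_sub, map_smul,
    Function.comp_apply]
  field_simp
  ring

lemma hasDerivAt_div_groundState_ray {θ : E} {r : ℝ} (hu : DifferentiableAt ℝ u (x + r • θ))
    (hb : 1 < ‖b‖) (hx : x + r • θ ∈ Metric.ball 0 1) :
    HasDerivAt (fun t : ℝ => u (x + t • θ) / groundState b (x + t • θ))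
      ((groundState b (x + r • θ))⁻¹ *
        inner ℝ (gradient u (x + r • θ) - u (x + r • θ) • logGrad b (x + r • θ)) θ) r := by
  have hline : HasDerivAt (fun t : ℝ => x + t • θ) θ r := by
    simpa using ((hasDerivAt_id r).smul_const θ).const_add x
  exact HasFDerivAt.comp_hasDerivAt (f := fun t => x + t • θ) r
    (hasFDerivAt_div_groundState hu hb hx) hline

/-- The pointwise size of `u` and of its gradient relative to the ground state on the Whitney disc
of radius `R`. The constant `13` is that of `IsWhitneyDisc.inv_sq_le_gain`. -/
def localDensity (u : E → ℝ) (b : E) (R : ℝ) (y : E) : ℝ :=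
  √(‖gradient u y - u y • logGrad b y‖ ^ 2 + (u y / (13 * R)) ^ 2)

lemma localDensity_nonneg (y : E) : 0 ≤ localDensity u b R y := sqrt_nonneg _

lemma norm_gradient_sub_le_localDensity (y : E) :
    ‖gradient u y - u y • logGrad b y‖ ≤ localDensity u b R y :=
  le_sqrt_of_sq_le (le_add_of_nonneg_right (sq_nonneg _))

lemma abs_le_localDensity (hR : 0 < R) (y : E) : |u y| ≤ 13 * R * localDensity u b R y := by
  have h : |u y / (13 * R)| ≤ localDensity u b R y :=
    abs_le_sqrt (le_add_of_nonneg_left (sq_nonneg _))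
  rw [abs_div, abs_of_pos (by positivity : 0 < 13 * R), div_le_iff₀ (by positivity)] at h
  linarith

lemma abs_cutoff_deriv_le_localDensity (hR : 0 < R) {θ : E} (hθ : ‖θ‖ = 1) {r : ℝ}
    (hr : r ∈ Set.Icc 0 R) (y : E) :
    |-(2 * r / R ^ 2) * u y + (1 - (r / R) ^ 2) *
      inner ℝ (gradient u y - u y • logGrad b y) θ| ≤
        (26 * (r / R) + (1 - (r / R) ^ 2)) * localDensity u b R y := by
  have hr0 := hr.1
  have hcut : 0 ≤ 1 - (r / R) ^ 2 := by
    have : r / R ≤ 1 := (div_le_one hR).2 hr.2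
    have : 0 ≤ r / R := by positivity
    nlinarith
  have hinner : |inner ℝ (gradient u y - u y • logGrad b y) θ| ≤ localDensity u b R y := by
    refine (abs_real_inner_le_norm _ _).trans ?_
    rw [hθ, mul_one]
    exact norm_gradient_sub_le_localDensity y
  calc _ ≤ 2 * r / R ^ 2 * |u y| +
          (1 - (r / R) ^ 2) * |inner ℝ (gradient u y - u y • logGrad b y) θ| := by
        refine (abs_add_le _ _).trans_eq ?_
        rw [abs_mul, abs_mul, abs_neg, abs_of_nonneg hcut,
          abs_of_nonneg (by positivity : 0 ≤ 2 * r / R ^ 2)]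
    _ ≤ 2 * r / R ^ 2 * (13 * R * localDensity u b R y) +
          (1 - (r / R) ^ 2) * localDensity u b R y := by
        gcongr
        exact abs_le_localDensity hR y
    _ = (26 * (r / R) + (1 - (r / R) ^ 2)) * localDensity u b R y := by
        field_simp
        ring

-- The left-hand side is `ψ x` times the derivative of `(1 - (r/R)²) u/ψ` along the ray.
lemma groundState_mul_abs_cutoff_deriv_le (h : IsWhitneyDisc a b R) (hx : x ∈ Metric.ball a R)
    {θ : E} (hθ : ‖θ‖ = 1) {r : ℝ} (hr : r ∈ Set.Icc 0 R) :
    groundState b x * |-(2 * r / R ^ 2) * (u (x + r • θ) / groundState b (x + r • θ)) +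
      (1 - (r / R) ^ 2) * ((groundState b (x + r • θ))⁻¹ *
        inner ℝ (gradient u (x + r • θ) - u (x + r • θ) • logGrad b (x + r • θ)) θ)| ≤
      (1 + 107 * (r / R)) * localDensity u b R (x + r • θ) := by
  have := groundState_pos h.one_lt_norm_pole
    (h.ball_subset (Metric.ball_subset_ball (by linarith [h.pos]) hx))
  have hψy := groundState_pos h.one_lt_norm_pole (ray_mem_ball hθ h hx hr)
  have hdist : dist (x + r • θ) x = r := by
    rw [dist_self_add_left, norm_smul, hθ, mul_one, norm_of_nonneg hr.1]
  have hratio := h.groundState_div_le hx (hdist.trans_le hr.2)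
  rw [hdist] at hratio
  have hderiv := abs_cutoff_deriv_le_localDensity (u := u) (b := b) h.pos hθ hr (x + r • θ)
  have hF := localDensity_nonneg (u := u) (b := b) (R := R) (x + r • θ)
  set y := x + r • θ
  have hpoly : (1 + r / R) ^ 2 * (26 * (r / R) + (1 - (r / R) ^ 2)) ≤ 1 + 107 * (r / R) := by
    have hz0 : 0 ≤ r / R := div_nonneg hr.1 h.pos.le
    have hz1 : r / R ≤ 1 := (div_le_one h.pos).2 hr.2
    generalize r / R = z at *
    nlinarith [mul_nonneg hz0 (sub_nonneg.2 hz1), mul_nonneg hz0 hz0, pow_nonneg hz0 3,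
      pow_nonneg hz0 4, mul_nonneg (mul_nonneg hz0 hz0) (sub_nonneg.2 hz1)]
  calc _ = groundState b x * |(groundState b y)⁻¹ * (-(2 * r / R ^ 2) * u y +
        (1 - (r / R) ^ 2) * inner ℝ (gradient u y - u y • logGrad b y) θ)| := by ring_nf
    _ = groundState b x / groundState b y * |-(2 * r / R ^ 2) * u y +
        (1 - (r / R) ^ 2) * inner ℝ (gradient u y - u y • logGrad b y) θ| := by
        rw [abs_mul, abs_of_pos (inv_pos.2 hψy), ← mul_assoc, ← div_eq_mul_inv]
    _ ≤ (1 + r / R) ^ 2 * ((26 * (r / R) + (1 - (r / R) ^ 2)) * localDensity u b R y) := by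
        gcongr
    _ ≤ (1 + 107 * (r / R)) * localDensity u b R y := by
        rw [← mul_assoc]
        gcongr

namespace IsC1Test

lemma enorm_le_lintegral_ray (hu : IsC1Test Ω u) (h : IsWhitneyDisc a b R)
    (hx : x ∈ Metric.ball a R) {θ : E} (hθ : ‖θ‖ = 1) :
    ‖u x‖ₑ ≤ ∫⁻ r in Set.Ioo 0 R,
      ENNReal.ofReal ((1 + 107 * (r / R)) * localDensity u b R (x + r • θ)) := by
  have hray : ∀ r ∈ Set.Icc 0 R, x + r • θ ∈ Metric.ball 0 1 := fun r => ray_mem_ball hθ h hx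
  have hderiv := fun r hr => hasDerivAt_div_groundState_ray
    (hu.contDiff.differentiable one_ne_zero _) h.one_lt_norm_pole (hray r hr)
  have hcont : ContinuousOn (fun r : ℝ => (groundState b (x + r • θ))⁻¹ *
      inner ℝ (gradient u (x + r • θ) - u (x + r • θ) • logGrad b (x + r • θ)) θ)
      (Set.Icc 0 R) := by
    have hu_cont := hu.contDiff.continuous
    have hgrad := hu.continuous_gradient
    have hX : ContinuousOn (fun r : ℝ => logGrad b (x + r • θ)) (Set.Icc 0 R) :=
      (contDiffOn_logGrad h.one_lt_norm_pole).continuousOn.comp (by fun_prop) hray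
    have hψ : ContinuousOn (fun r : ℝ => groundState b (x + r • θ)) (Set.Icc 0 R) :=
      fun r hr => ContinuousAt.continuousWithinAt <| ContinuousAt.comp (f := fun t => x + t • θ)
        (hasFDerivAt_groundState h.one_lt_norm_pole (hray r hr)).continuousAt (by fun_prop)
    refine (hψ.inv₀ fun r hr => (groundState_pos h.one_lt_norm_pole (hray r hr)).ne').mul ?_
    fun_prop
  have hψ := groundState_pos h.one_lt_norm_pole
    (h.ball_subset (Metric.ball_subset_ball (by linarith [h.pos]) hx))
  have hftc := enorm_le_lintegral_cutoff_deriv h.pos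
    (fun r hr => (hderiv r hr).const_mul (groundState b x)) (continuousOn_const.mul hcont)
  simp only [zero_smul, add_zero, mul_div_cancel₀ _ hψ.ne'] at hftc
  refine hftc.trans (setLIntegral_mono' measurableSet_Ioo fun r hr => ?_)
  rw [enorm_eq_ofReal_abs]
  refine ENNReal.ofReal_le_ofReal (Eq.trans_le ?_
    (groundState_mul_abs_cutoff_deriv_le h hx hθ (Set.Ioo_subset_Icc_self hr)))
  rw [← abs_of_pos hψ, ← abs_mul, abs_of_pos hψ]
  congr 1
  ring

lemma measurable_localDensity [MeasurableSpace E] [BorelSpace E] (hu : IsC1Test Ω u) (b : E)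
    (R : ℝ) : Measurable (localDensity u b R) := by
  have hu_meas := hu.contDiff.continuous.measurable
  have hgrad := hu.continuous_gradient.measurable
  unfold localDensity logGrad
  fun_prop

end IsC1Test

end Potential

/-! ### The potential on the plane -/

section PlanarPotential

variable {u : E2 → ℝ} {a b x : E2} {R : ℝ}

lemma IsC1Test.lintegral_localDensity_sq_le (hu : IsC1Test B2 u) (h : IsWhitneyDisc a b R) :
    ∫⁻ y in Metric.ball a (2 * R), ENNReal.ofReal (localDensity u b R y ^ 2) ≤
      ENNReal.ofReal (H u) := by
  have := h.pos
  have hb := h.one_lt_norm_pole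
  rw [hu.hardy_eq_setIntegral hb, ofReal_integral_eq_lintegral_ofReal]
  · refine le_trans ?_ (lintegral_mono_set h.ball_subset)
    refine setLIntegral_mono' measurableSet_ball fun y hy => ENNReal.ofReal_le_ofReal ?_
    rw [localDensity, sq_sqrt (by positivity), div_pow, div_eq_inv_mul]
    gcongr
    exact h.inv_sq_le_gain hy
  · exact (hu.integrable_groundState_energy hb).integrableOn
  · refine ae_restrict_of_forall_mem measurableSet_ball fun y hy => ?_
    have := gain_pos hb hy
    simp only [Pi.zero_apply]
    positivity

lemma IsC1Test.lintegral_normalized_localDensity_sq_le_one (hu : IsC1Test B2 u) (h0 : u ≠ 0)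
    (h : IsWhitneyDisc a b R) :
    ∫⁻ y in Metric.ball a (2 * R),
      (ENNReal.ofReal (√(H u))⁻¹ * ENNReal.ofReal (localDensity u b R y)) ^ 2 ≤ 1 := by
  have hH := hu.hardy_pos h0
  have hpow (y : E2) : (ENNReal.ofReal (√(H u))⁻¹ * ENNReal.ofReal (localDensity u b R y)) ^ 2 =
      ENNReal.ofReal (H u)⁻¹ * ENNReal.ofReal (localDensity u b R y ^ 2) := by
    rw [mul_pow, ← ENNReal.ofReal_pow (by positivity),
      ← ENNReal.ofReal_pow (localDensity_nonneg _), inv_pow, sq_sqrt hH.le]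
  simp only [hpow]
  rw [lintegral_const_mul' _ _ ENNReal.ofReal_ne_top]
  grw [hu.lintegral_localDensity_sq_le h]
  rw [← ENNReal.ofReal_mul (by positivity), inv_mul_cancel₀ hH.ne', ENNReal.ofReal_one]

/-- The Newtonian kernel of the plane, normalised so that `y ↦ 1 / (√π * dist y x)` has the
decreasing rearrangement `τ ↦ 1 / √τ`, plus a constant. -/
def newton (κ : ℝ) (x y : E2) : ENNReal := ENNReal.ofReal (1 / (√π * dist y x) + κ)

lemma measurable_newton (κ : ℝ) : Measurable (Function.uncurry (newton κ)) := by
  unfold newton Function.uncurry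
  fun_prop

lemma IsC1Test.ofReal_two_sqrt_pi_mul_abs_le (hu : IsC1Test B2 u) (h : IsWhitneyDisc a b R)
    (hx : x ∈ Metric.ball a R) :
    ENNReal.ofReal (2 * √π * |u x|) ≤ ∫⁻ y in Metric.ball a (2 * R),
      ENNReal.ofReal (localDensity u b R y) * newton (107 / (√π * R)) x y := by
  have hR := h.pos
  have hdens := hu.measurable_localDensity b R
  have hsub : Metric.ball x R ⊆ Metric.ball a (2 * R) := fun y hy =>
    IsWhitneyDisc.mem_ball_of_dist_le hx (Metric.mem_ball.1 hy).le
  have hray (θ : Metric.sphere (0 : E2) 1) : ENNReal.ofReal ((√π)⁻¹ * |u x|) ≤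
      ∫⁻ r in Set.Ioo 0 R, ENNReal.ofReal (r ^ (Module.finrank ℝ E2 - 1)) *
        (ENNReal.ofReal (localDensity u b R (x + r • θ.1)) *
          newton (107 / (√π * R)) x (x + r • θ.1)) := by
    have hθ : ‖θ.1‖ = 1 := norm_eq_of_mem_sphere θ
    rw [ENNReal.ofReal_mul (by positivity), ← enorm_eq_ofReal_abs]
    grw [hu.enorm_le_lintegral_ray h hx hθ]
    rw [← lintegral_const_mul' _ _ ENNReal.ofReal_ne_top]
    refine setLIntegral_mono' measurableSet_Ioo fun r hr => Eq.le ?_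
    have hr0 := hr.1
    rw [newton, dist_self_add_left, norm_smul, hθ, mul_one, norm_of_nonneg hr0.le,
      finrank_euclideanSpace_fin, ← ENNReal.ofReal_mul (by positivity),
      ← ENNReal.ofReal_mul (localDensity_nonneg _), ← ENNReal.ofReal_mul (by positivity)]
    congr 1
    field_simp
    ring
  calc ENNReal.ofReal (2 * √π * |u x|)
      = ∫⁻ _ : Metric.sphere (0 : E2) 1, ENNReal.ofReal ((√π)⁻¹ * |u x|) ∂volume.toSphere := by
        rw [lintegral_const, toSphere_volume_univ_E2, ← ENNReal.ofReal_mul (by positivity)]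
        congr 1
        have : √π ^ 2 = π := sq_sqrt pi_pos.le
        field_simp
        linear_combination |u x| * this
    _ ≤ ∫⁻ y in Metric.ball x R,
          ENNReal.ofReal (localDensity u b R y) * newton (107 / (√π * R)) x y := by
        rw [setLIntegral_ball_eq_lintegral_toSphere volume x R (by unfold newton; fun_prop)]
        exact lintegral_mono hray
    _ ≤ _ := lintegral_mono_set hsub

end PlanarPotential

/-! ### The local inequality -/

lemma newton_comm (κ : ℝ) (x y : E2) : newton κ x y = newton κ y x := by
  rw [newton, newton, dist_comm]

section Newton

variable {κ : ℝ}

lemma setLIntegral_newton_le (hκ : 0 ≤ κ) (x : E2) {G : Set E2} (hG : volume G ≠ ⊤) :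
    ∫⁻ y in G, newton κ x y ≤
      ENNReal.ofReal (2 * √(volume.real G) + κ * volume.real G) := by
  have hsplit (y : E2) : newton κ x y =
      ENNReal.ofReal (√π)⁻¹ * ENNReal.ofReal (1 / dist y x) + ENNReal.ofReal κ := by
    rw [newton, ENNReal.ofReal_add (by positivity) hκ, ← ENNReal.ofReal_mul (by positivity),
      ← one_div, one_div_mul_one_div]
  simp only [hsplit]
  rw [lintegral_add_right _ measurable_const, lintegral_const_mul' _ _ ENNReal.ofReal_ne_top,
    setLIntegral_const, ← ofReal_measureReal hG, ← ENNReal.ofReal_mul hκ]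
  grw [setLIntegral_one_div_dist_le x measureReal_nonneg (ofReal_measureReal hG).ge]
  rw [← ENNReal.ofReal_mul (by positivity), ← ENNReal.ofReal_add (by positivity) (by positivity)]
  refine ENNReal.ofReal_le_ofReal (le_of_eq ?_)
  field_simp

lemma isNewtonianKernel_newton (hκ : 0 ≤ κ) {A S : Set E2} (hA : volume A ≠ ⊤)
    (hS : volume S ≠ ⊤) :
    IsNewtonianKernel (volume.restrict A) (volume.restrict S) (newton κ) κ where
  measurable := measurable_newton κ
  nonneg := hκ
  setLIntegral_left_le E hE y := by
    simp only [newton_comm κ _ y]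
    rw [Measure.restrict_restrict hE, measureReal_restrict_apply hE]
    exact setLIntegral_newton_le hκ y (measure_ne_top_of_subset Set.inter_subset_right hA)
  setLIntegral_right_le G hG x := by
    rw [Measure.restrict_restrict hG, measureReal_restrict_apply hG]
    exact setLIntegral_newton_le hκ x (measure_ne_top_of_subset Set.inter_subset_right hS)

end Newton

lemma volume_ball_two_mul_le (a : E2) {R : ℝ} (hR : 0 ≤ R) :
    volume (Metric.ball a (2 * R)) ≤ ENNReal.ofReal (4 * π * R ^ 2) := by
  rw [EuclideanSpace.volume_ball_fin_two, ← ENNReal.ofReal_pow (by positivity),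
    ← ENNReal.ofReal_mul (by positivity)]
  refine ENNReal.ofReal_le_ofReal (le_of_eq ?_)
  ring

theorem IsC1Test.setLIntegral_exp_le {u : E2 → ℝ} {a b : E2} {R : ℝ} (hu : IsC1Test B2 u)
    (h0 : u ≠ 0) (h : IsWhitneyDisc a b R) :
    ∫⁻ x in Metric.ball a R, ENNReal.ofReal (rexp (4 * π * u x ^ 2 / H u)) ≤
      ENNReal.ofReal (4 * π * R ^ 2 * rexp 1 * garsiaConst (2 * 214 ^ 2 + 8 * 214 + 4)) := by
  have hR := h.pos
  have hH := hu.hardy_pos h0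
  have hball := volume_ball_two_mul_le a hR.le
  have hdens := hu.measurable_localDensity b R
  have hsq (x : E2) : 4 * π * u x ^ 2 / H u = ((√(H u))⁻¹ * (2 * √π * u x)) ^ 2 := by
    rw [mul_pow, mul_pow, mul_pow, inv_pow, sq_sqrt hH.le, sq_sqrt pi_pos.le]
    ring
  simp only [hsq]
  have hκM : 107 / (√π * R) * √(4 * π * R ^ 2) ≤ 214 := by
    rw [show 4 * π * R ^ 2 = (2 * √π * R) ^ 2 by rw [mul_pow, mul_pow, sq_sqrt pi_pos.le]; ring,
      sqrt_sq (by positivity)]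
    refine le_of_eq ?_
    field_simp
    norm_num
  refine (isNewtonianKernel_newton (κ := 107 / (√π * R)) (by positivity) measure_ball_lt_top.ne
    measure_ball_lt_top.ne).lintegral_exp_sq_le (by positivity) ?_ ?_ hκM (by fun_prop)
    (hu.lintegral_normalized_localDensity_sq_le_one h0 h)
    ((hu.contDiff.continuous.measurable.const_mul _).const_mul _) ?_
  · rw [Measure.restrict_apply_univ]
    exact (measure_mono (Metric.ball_subset_ball (by linarith))).trans hball
  · rwa [Measure.restrict_apply_univ]
  · refine ae_restrict_of_forall_mem measurableSet_ball fun x hx => ?_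
    simp only [mul_assoc (ENNReal.ofReal (√(H u))⁻¹)]
    rw [lintegral_const_mul' _ _ ENNReal.ofReal_ne_top, enorm_mul,
      Real.enorm_of_nonneg (inv_nonneg.2 (sqrt_nonneg _)), enorm_eq_ofReal_abs, abs_mul,
      abs_of_nonneg (by positivity : 0 ≤ 2 * √π)]
    gcongr
    exact hu.ofReal_two_sqrt_pi_mul_abs_le h hx

/-! ### Averaging over Whitney balls -/

section Whitney

variable {E : Type*} [NormedAddCommGroup E] [NormedSpace ℝ E] [FiniteDimensional ℝ E]
  [MeasurableSpace E] [BorelSpace E] (μ : Measure E) [μ.IsAddHaarMeasure]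

lemma measure_ball_le_setLIntegral_whitney {x : E} (hx : x ∈ Metric.ball 0 1) :
    μ (Metric.ball 0 1) ≤ 9 ^ Module.finrank ℝ E * ∫⁻ a in Metric.ball 0 1,
      {a : E | dist x a < (1 - ‖a‖) / 4}.indicator
        (fun a => (ENNReal.ofReal (1 - ‖a‖) ^ Module.finrank ℝ E)⁻¹) a ∂μ := by
  set n := Module.finrank ℝ E
  set d := 1 - ‖x‖
  have hd : 0 < d := sub_pos.2 (mem_ball_zero_iff.1 hx)
  have hnear : ∀ a ∈ Metric.ball x (d / 8),
      ‖a‖ < 1 ∧ dist x a < (1 - ‖a‖) / 4 ∧ 1 - ‖a‖ ≤ 9 / 8 * d := fun a ha => by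
    rw [Metric.mem_ball, dist_eq_norm] at ha
    obtain ⟨hlow, hupp⟩ := abs_le.1 (abs_norm_sub_norm_le a x)
    rw [dist_comm, dist_eq_norm]
    refine ⟨?_, ?_, ?_⟩ <;> linarith
  calc μ (Metric.ball 0 1)
      = 9 ^ n * ∫⁻ _ in Metric.ball x (d / 8), (ENNReal.ofReal (9 / 8 * d) ^ n)⁻¹ ∂μ := by
        rw [setLIntegral_const, μ.addHaar_ball_of_pos x (by positivity), ← mul_assoc, ← mul_assoc,
          ENNReal.ofReal_pow (by positivity), ENNReal.inv_pow, ← mul_pow, ← mul_pow]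
        have h9 : 9 * (ENNReal.ofReal (9 / 8 * d))⁻¹ * ENNReal.ofReal (d / 8) = 1 := by
          rw [← ENNReal.ofReal_inv_of_pos (by positivity), ← ENNReal.ofReal_ofNat,
            ← ENNReal.ofReal_mul (by positivity), ← ENNReal.ofReal_mul (by positivity),
            ← ENNReal.ofReal_one]
          congr 1
          field_simp
        rw [h9, one_pow, one_mul]
    _ ≤ 9 ^ n * ∫⁻ a in Metric.ball x (d / 8), {a : E | dist x a < (1 - ‖a‖) / 4}.indicator
          (fun a => (ENNReal.ofReal (1 - ‖a‖) ^ n)⁻¹) a ∂μ := by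
        gcongr 1
        refine setLIntegral_mono' measurableSet_ball fun a ha => ?_
        obtain ⟨_, hdist, hle⟩ := hnear a ha
        rw [Set.indicator_of_mem (s := {a : E | dist x a < (1 - ‖a‖) / 4}) hdist]
        gcongr
    _ ≤ _ := by
        gcongr 1
        exact lintegral_mono_set fun a ha => mem_ball_zero_iff.2 (hnear a ha).1

-- The hypothesis is integrated against `(1 - ‖a‖)⁻ⁿ da` over the unit ball.
theorem setLIntegral_ball_le_of_forall_whitney {f : E → ENNReal} (hf : Measurable f) {C : ENNReal}
    (hC : ∀ a ∈ Metric.ball 0 1, ∫⁻ x in Metric.ball a ((1 - ‖a‖) / 4), f x ∂μ ≤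
      C * ENNReal.ofReal (1 - ‖a‖) ^ Module.finrank ℝ E) :
    ∫⁻ x in Metric.ball 0 1, f x ∂μ ≤ 9 ^ Module.finrank ℝ E * C := by
  set n := Module.finrank ℝ E
  set w : E → ENNReal := fun a => (ENNReal.ofReal (1 - ‖a‖) ^ n)⁻¹
  have hw : Measurable w := by fun_prop
  set K : E → E → ENNReal := fun x => {a : E | dist x a < (1 - ‖a‖) / 4}.indicator w
  have hK : Measurable (Function.uncurry K) :=
    (hw.comp measurable_snd).indicator (measurableSet_lt (by fun_prop) (by fun_prop))
  have hdisc : ∀ a ∈ Metric.ball (0 : E) 1, ∫⁻ x, K x a * f x ∂μ ≤ C := fun a ha => by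
    have hKf (x : E) : K x a * f x =
        (Metric.ball a ((1 - ‖a‖) / 4)).indicator (fun x => w a * f x) x := by
      by_cases hx : dist x a < (1 - ‖a‖) / 4 <;> simp [K, hx]
    have ha1 : 0 < ENNReal.ofReal (1 - ‖a‖) :=
      ENNReal.ofReal_pos.2 (sub_pos.2 (mem_ball_zero_iff.1 ha))
    simp only [hKf]
    rw [lintegral_indicator measurableSet_ball, lintegral_const_mul _ hf]
    grw [hC a ha]
    rw [mul_left_comm, ENNReal.inv_mul_cancel (pow_ne_zero n ha1.ne') (by finiteness), mul_one]
  have hV := (Metric.measure_ball_pos μ (0 : E) one_pos).ne'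
  refine (ENNReal.mul_le_mul_iff_right hV measure_ball_lt_top.ne).1 ?_
  calc μ (Metric.ball 0 1) * ∫⁻ x in Metric.ball 0 1, f x ∂μ
      = ∫⁻ x in Metric.ball 0 1, μ (Metric.ball 0 1) * f x ∂μ := (lintegral_const_mul _ hf).symm
    _ ≤ ∫⁻ x in Metric.ball 0 1, 9 ^ n * ∫⁻ a in Metric.ball 0 1, K x a * f x ∂μ ∂μ := by
        refine setLIntegral_mono' measurableSet_ball fun x hx => ?_
        rw [lintegral_mul_const _ (by fun_prop), ← mul_assoc]
        gcongr
        exact measure_ball_le_setLIntegral_whitney μ hx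
    _ = 9 ^ n * ∫⁻ a in Metric.ball 0 1, ∫⁻ x in Metric.ball 0 1, K x a * f x ∂μ ∂μ := by
        rw [lintegral_const_mul' _ _ (by finiteness), lintegral_lintegral_swap (by fun_prop)]
    _ ≤ 9 ^ n * ∫⁻ _ in Metric.ball (0 : E) 1, C ∂μ := by
        gcongr 1
        exact setLIntegral_mono' measurableSet_ball fun a ha =>
          (setLIntegral_le_lintegral _ _).trans (hdisc a ha)
    _ = μ (Metric.ball 0 1) * (9 ^ n * C) := by
        rw [setLIntegral_const]
        ring

end Whitney

/-! ### The Hardy–Moser–Trudinger inequality -/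

theorem hardy_moser_trudinger_general :
    ∃ C₀ : ℝ, 0 < C₀ ∧ ∀ u : E2 → ℝ, IsC1Test B2 u → u ≠ 0 →
      0 < H u ∧ (∫ x in B2, Real.exp (4 * π * (u x) ^ 2 / H u)) ≤ C₀ := by
  set C : ℝ := 4 * π * rexp 1 * garsiaConst (2 * 214 ^ 2 + 8 * 214 + 4)
  have hC : 0 < C := mul_pos (by positivity) (garsiaConst_pos (by norm_num))
  refine ⟨9 ^ 2 * (C / 16), by positivity, fun u hu h0 => ⟨hu.hardy_pos h0, ?_⟩⟩
  have hmeas : Measurable fun x => rexp (4 * π * u x ^ 2 / H u) := by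
    have := hu.contDiff.continuous.measurable
    fun_prop
  have hlocal : ∀ a ∈ Metric.ball (0 : E2) 1, ∫⁻ x in Metric.ball a ((1 - ‖a‖) / 4),
      ENNReal.ofReal (rexp (4 * π * u x ^ 2 / H u)) ≤
        ENNReal.ofReal (C / 16) * ENNReal.ofReal (1 - ‖a‖) ^ Module.finrank ℝ E2 := fun a ha => by
    have ha1 : 0 < 1 - ‖a‖ := sub_pos.2 (mem_ball_zero_iff.1 ha)
    obtain ⟨b, hb⟩ := exists_isWhitneyDisc ha
    refine (hu.setLIntegral_exp_le h0 hb).trans_eq ?_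
    rw [finrank_euclideanSpace_fin, ← ENNReal.ofReal_pow ha1.le,
      ← ENNReal.ofReal_mul (by positivity)]
    congr 1
    simp only [C]
    ring
  rw [integral_eq_lintegral_of_nonneg_ae (Eventually.of_forall fun x => (exp_pos _).le)
    hmeas.aestronglyMeasurable]
  refine ENNReal.toReal_le_of_le_ofReal (by positivity)
    ((setLIntegral_ball_le_of_forall_whitney volume hmeas.ennreal_ofReal hlocal).trans_eq ?_)
  rw [finrank_euclideanSpace_fin, ENNReal.ofReal_mul (by positivity),
    ENNReal.ofReal_pow (by norm_num), ENNReal.ofReal_ofNat]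

/-- **Hardy–Moser–Trudinger inequality** (Theorem 1):
there is `C₀ > 0` with `∫_B exp(4π u² / H(u)) ≤ C₀` for every nonzero `u ∈ C_c^∞(B)`,
and `H(u) > 0` for such `u`. -/
theorem hardy_moser_trudinger :
    ∃ C₀ : ℝ, 0 < C₀ ∧ ∀ u : E2 → ℝ, IsTest u → u ≠ 0 →
      0 < H u ∧ (∫ x in B2, Real.exp (4 * π * (u x) ^ 2 / H u)) ≤ C₀ := by
  obtain ⟨C₀, hC₀, h⟩ := hardy_moser_trudinger_general
  exact ⟨C₀, hC₀, fun u hu => h u ⟨hu.1.of_le (by exact_mod_cast le_top), hu.2.1, hu.2.2⟩⟩
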